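/- arXiv:2109.07656 — 6 statements merged into one kernel-verified Lean document; each statement's English description precedes it below -/
import Mathlib

section
/- Let k and δ be integers with δ ≥ k ≥ 3, and let G be a connected graph of order n with minimum degree δ(G) = δ. If n ≥ F(k,δ) and the Q-index satisfies q(G) ≥ 2(n−δ+k−3), then G is k-connected unless G belongs to the family A₁(n,k,δ). -/
/-!
Put `p = k - 1` and `t = δ - k + 2`, so that the threshold is `2 * (n - t - 1)` and `F k δ` becomes
a polynomial in `p` and `t` with positive coefficients.

If `G` is not `k`-connected, there is a set `S` of exactly `p` vertices whose removal separates the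
remaining vertices into sides `A` and `B`; the minimum degree gives `|A| ≥ t`, and the larger side
`B` has more than `t` vertices (`exists_cut_eq`).

Suppose first that `|A| > t`. Then `G` is a subgraph of `K_p ∨ (K_a ∪ K_b)` with `a, b > t`. Taking
the degrees of that graph as a positive test vector, the Collatz–Wielandt bound shows that all
eigenvalues are below the threshold (`eig_lt_of_large_sides`); the decisive inequality is
`a * b > t * (n - 1)`.

So `|A| = t`, and the minimum degree forces `A` to be a clique completely joined to `S`. Hence `G`
is `A(n,k,δ)` with some edges outside `A` removed (`memA1_of_cut`), and only their number has to be
bounded. Suppose at least `m = ⌊t * p / 4⌋ + 1` of them are missing. The complement `W` of `A` has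
`w = n - t` vertices and the threshold is `2 * (w - 1)`, the `Q`-index of the clique on `W`. Write an
eigenvector on `W` as `c + z` with `∑ z = 0`. The clique on `W` has spectral gap `w`, which
contributes `w * ‖z‖²`; the missing edges contribute `4 * m * c²`; the edges between `A` and `S` cost
`t * p * c²`. As `4 * m ≥ t * p + 1`, the difference is a form with leading part at least
`w * ‖z‖² + c²` plus about `2 * w * ‖x|_A‖²`, and for `w` this large all cross terms are absorbed
(`quad_definite`, `eig_lt_of_missing_pairs`). Therefore no eigenvalue reaches the threshold.
-/

open Finset Matrix

attribute [local instance] Classical.propDecidable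

namespace QGraph

variable {V : Type*} [Fintype V] [DecidableEq V]

/-- The signless Laplacian matrix `Q(G) = D(G) + A(G)` of a simple graph. -/
noncomputable def qMatrix (G : SimpleGraph V) : Matrix V V ℝ :=
  Matrix.of fun i j =>
    (if i = j then (G.degree i : ℝ) else 0) + (if G.Adj i j then 1 else 0)

/-- The `Q`-index of `G`: the largest eigenvalue of `Q(G)`. -/
noncomputable def qIndex (G : SimpleGraph V) : ℝ :=
  sSup {μ : ℝ | ∃ x : V → ℝ, x ≠ 0 ∧ qMatrix G *ᵥ x = μ • x}

/-- `G` is `k`-connected: it has more than `k` vertices and removing fewer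
than `k` vertices leaves a connected graph. -/
def IsKConnected (G : SimpleGraph V) (k : ℕ) : Prop :=
  k < Fintype.card V ∧
    ∀ S : Finset V, S.card < k → (G.induce ((↑S : Set V)ᶜ)).Connected

/-- The graph `A(n,k,δ) = K_{k-1} ∨ (K_{δ-k+2} ∪ K_{n-δ-1})`. -/
def graphA (n k δ : ℕ) : SimpleGraph (Fin n) :=
  SimpleGraph.fromRel fun i j =>
    (i : ℕ) < k - 1 ∨ (j : ℕ) < k - 1 ∨
    (k - 1 ≤ (i : ℕ) ∧ (i : ℕ) < δ + 1 ∧ k - 1 ≤ (j : ℕ) ∧ (j : ℕ) < δ + 1) ∨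
    (δ + 1 ≤ (i : ℕ) ∧ δ + 1 ≤ (j : ℕ))

/-- `X`: the vertices of degree `δ` in `A(n,k,δ)`. -/
def inX (n k δ : ℕ) (v : Fin n) : Prop := k - 1 ≤ (v : ℕ) ∧ (v : ℕ) < δ + 1

/-- `Y`: the `k-1` join vertices (degree `n-1`) of `A(n,k,δ)`. -/
def inY (n k : ℕ) (v : Fin n) : Prop := (v : ℕ) < k - 1

/-- `Z`: the vertices of degree `n-δ+k-3` in `A(n,k,δ)`. -/
def inZ (n δ : ℕ) (v : Fin n) : Prop := δ + 1 ≤ (v : ℕ)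

noncomputable def F (k δ : ℕ) : ℝ :=
  ((k : ℝ) ^ 2 + 2 * k - 3) * (δ : ℝ) ^ 2
    - (2 * (k : ℝ) ^ 3 - (k : ℝ) ^ 2 - 17 * k + 8) * (δ : ℝ)
    + ((k : ℝ) ^ 4 - 3 * (k : ℝ) ^ 3 - 8 * (k : ℝ) ^ 2 + 23 * k + 4)

/-- `E'` is a set of edges of `A(n,k,δ)` with both endpoints in `Y ∪ Z`. -/
def EdgeConds (n k δ : ℕ) (E' : Finset (Sym2 (Fin n))) : Prop :=
  (↑E' : Set (Sym2 (Fin n))) ⊆ (graphA n k δ).edgeSet ∧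
    ∀ e ∈ E', ∀ v ∈ e, inY n k v ∨ inZ n δ v

/-- Membership (up to isomorphism) in the family `𝒜₁(n,k,δ)`. -/
def memA1 (n k δ : ℕ) (G : SimpleGraph (Fin n)) : Prop :=
  ∃ E' : Finset (Sym2 (Fin n)), EdgeConds n k δ E' ∧
    E'.card ≤ (δ - k + 2) * (k - 1) / 4 ∧
    Nonempty (G ≃g (graphA n k δ).deleteEdges (↑E' : Set (Sym2 (Fin n))))

/-- Conditions defining a concrete member of `𝒜₂(n,k,δ)`. -/
def A2Conds (n k δ : ℕ) (E' : Finset (Sym2 (Fin n))) : Prop :=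
  EdgeConds n k δ E' ∧ E'.card = (δ - k + 2) * (k - 1) / 4 + 1

/-- Membership (up to isomorphism) in the family `𝒜₂(n,k,δ)`. -/
def memA2 (n k δ : ℕ) (G : SimpleGraph (Fin n)) : Prop :=
  ∃ E' : Finset (Sym2 (Fin n)), A2Conds n k δ E' ∧
    Nonempty (G ≃g (graphA n k δ).deleteEdges (↑E' : Set (Sym2 (Fin n))))

/-- The number of edges of `G` with both endpoints satisfying `P`. -/
noncomputable def edgesWithin (G : SimpleGraph V) (P : V → Prop) : ℕ :=
  (G.edgeFinset.filter fun e => ∀ v ∈ e, P v).card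

/-! ### Eigenvalue equation and test vectors -/

/-- `x` satisfies the eigenvalue equation of the signless Laplacian of `G` for the value `μ`,
written as a sum over neighbours so that degrees do not occur. -/
def IsQEig (G : SimpleGraph V) (μ : ℝ) (x : V → ℝ) : Prop :=
  ∀ i, ∑ j, (if G.Adj i j then x i + x j else 0) = μ * x i

lemma qMatrix_mulVec_apply (G : SimpleGraph V) (x : V → ℝ) (i : V) :
    (qMatrix G *ᵥ x) i = ∑ j, (if G.Adj i j then x i + x j else 0) := by
  have h1 : (G.degree i : ℝ) * x i = ∑ j, (if G.Adj i j then x i else 0) := by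
    rw [← Finset.sum_filter, Finset.sum_const, nsmul_eq_mul, ← G.card_neighborFinset_eq_degree i,
      G.neighborFinset_eq_filter]
  simp only [qMatrix, Matrix.mulVec, dotProduct, Matrix.of_apply, add_mul, ite_mul, zero_mul,
    one_mul, Finset.sum_add_distrib, Finset.sum_ite_eq, Finset.mem_univ, if_true]
  rw [h1, ← Finset.sum_add_distrib]
  refine Finset.sum_congr rfl fun j _ => ?_
  split_ifs <;> simp

/-- The supremum defining the `Q`-index is attained: the set of eigenvalues is finite, and were it
empty its supremum would be the junk value `0`. -/
lemma exists_eig_of_le_qIndex (G : SimpleGraph V) (c : ℝ) (hc : 0 < c) (h : c ≤ qIndex G) :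
    ∃ μ x, c ≤ μ ∧ x ≠ 0 ∧ IsQEig G μ x := by
  set T := {μ : ℝ | ∃ x : V → ℝ, x ≠ 0 ∧ qMatrix G *ᵥ x = μ • x} with hT
  have hfin : T.Finite := by
    refine (Module.End.finite_hasEigenvalue (Matrix.toLin' (qMatrix G))).subset ?_
    rintro μ ⟨x, hx, hm⟩
    exact Module.End.hasEigenvalue_of_hasEigenvector
      (x := x) (Module.End.hasEigenvector_iff.2
        ⟨Module.End.mem_eigenspace_iff.2 (by simpa using hm), hx⟩)
  have hne : T.Nonempty := by
    by_contra hne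
    have hq : qIndex G = sSup T := rfl
    rw [Set.not_nonempty_iff_eq_empty.1 hne, Real.sSup_empty] at hq
    linarith
  obtain ⟨x, hx, hm⟩ := hne.csSup_mem hfin
  refine ⟨sSup T, x, h, hx, fun i => ?_⟩
  rw [← qMatrix_mulVec_apply, hm]
  simp

/-- Collatz–Wielandt bound: evaluate the eigenvalue equation at a vertex maximizing
`|x i| / y i`. -/
lemma eig_lt_of_testVector (G : SimpleGraph V) (μ M : ℝ) (x y : V → ℝ) (hx : x ≠ 0)
    (he : IsQEig G μ x) (hy : ∀ i, 0 < y i)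
    (h : ∀ i, ∑ j, (if G.Adj i j then y i + y j else 0) < M * y i) : μ < M := by
  obtain ⟨v, hv⟩ := Function.ne_iff.1 hx
  obtain ⟨i, -, hi⟩ := Finset.exists_max_image Finset.univ (fun i => |x i| / y i) ⟨v, mem_univ v⟩
  set r := |x i| / y i with hr
  have hrpos : 0 < r :=
    lt_of_lt_of_le (div_pos (abs_pos.2 hv) (hy v)) (hi v (mem_univ v))
  have hle : ∀ j, |x j| ≤ r * y j := fun j => (div_le_iff₀ (hy j)).1 (hi j (mem_univ j))
  have hxi : |x i| = r * y i := by rw [hr]; field_simp [(hy i).ne']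
  have h1 : μ * |x i| ≤ r * ∑ j, (if G.Adj i j then y i + y j else 0) := by
    calc μ * |x i| ≤ |μ * x i| := by
          rw [abs_mul]; exact mul_le_mul_of_nonneg_right (le_abs_self μ) (abs_nonneg _)
      _ = |∑ j, (if G.Adj i j then x i + x j else 0)| := by rw [he i]
      _ ≤ ∑ j, |(if G.Adj i j then x i + x j else 0)| := Finset.abs_sum_le_sum_abs _ _
      _ ≤ ∑ j, r * (if G.Adj i j then y i + y j else 0) := by
          refine Finset.sum_le_sum fun j _ => ?_
          split_ifs
          · have := abs_add_le (x i) (x j)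
            have := hle i
            have := hle j
            linarith
          · simp
      _ = _ := by rw [Finset.mul_sum]
  have h2 := mul_lt_mul_of_pos_left (h i) hrpos
  have h3 : μ * |x i| < M * |x i| := by
    calc _ < r * (M * y i) := lt_of_le_of_lt h1 h2
      _ = _ := by rw [hxi]; ring
  exact lt_of_mul_lt_mul_right h3 (abs_nonneg _)

lemma IsQEig.sum_sq {G : SimpleGraph V} {μ : ℝ} {x : V → ℝ} (he : IsQEig G μ x) :
    ∑ i, ∑ j, (if G.Adj i j then (x i + x j) ^ 2 else 0) = 2 * μ * ∑ i, x i ^ 2 := by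
  have h1 : ∑ i, ∑ j, (if G.Adj i j then (x i + x j) * x i else 0) = μ * ∑ i, x i ^ 2 := by
    rw [Finset.mul_sum]
    refine Finset.sum_congr rfl fun i _ => ?_
    have := congrArg (· * x i) (he i)
    simp only [Finset.sum_mul, ite_mul, zero_mul] at this
    rw [this]; ring
  have h2 : ∑ i, ∑ j, (if G.Adj i j then (x i + x j) * x j else 0) = μ * ∑ i, x i ^ 2 := by
    rw [← h1, Finset.sum_comm]
    refine Finset.sum_congr rfl fun i _ => Finset.sum_congr rfl fun j _ => ?_
    simp only [G.adj_comm j i, add_comm (x j) (x i)]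
  rw [show 2 * μ * ∑ i, x i ^ 2 = μ * ∑ i, x i ^ 2 + μ * ∑ i, x i ^ 2 by ring]
  nth_rewrite 1 [← h1]
  rw [← h2]
  simp only [← Finset.sum_add_distrib]
  refine Finset.sum_congr rfl fun i _ => Finset.sum_congr rfl fun j _ => ?_
  split_ifs <;> ring

/-! ### A side with exactly `t` vertices and many missing edges -/

/-- Completing squares in `c` shows that the quadratic form is positive definite once `w` is
large: the coefficient of `c ^ 2` is at least `1`, split as `1/2 + 1/4 + 1/4` among the three
cross terms. -/
lemma quad_definite (X Z c L1 L2 L3 w t p m : ℝ) (hX : 0 ≤ X) (hZ : 0 ≤ Z)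
    (ht : 2 ≤ t) (hp : 2 ≤ p) (hm1 : t * p + 1 ≤ 4 * m) (hm2 : 4 * m ≤ t * p + 4)
    (hw : p * (p + 4) * t ^ 2 + (p ^ 2 + 5 * p + 7) * t + p + 9 ≤ w)
    (h1 : L1 ^ 2 ≤ 2 * m ^ 2 * Z) (h2 : L2 ^ 2 ≤ p * Z) (h3 : L3 ^ 2 ≤ t * X)
    (hK : (2 * (w - 1) - 2 * t) * X + w * Z + 4 * m * c ^ 2 + 4 * c * L1
      ≤ t * p * c ^ 2 + 2 * c * (p * L3 + t * L2) + 2 * p * X + 2 * t * Z) :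
    X = 0 ∧ Z = 0 ∧ c = 0 := by
  have htp : 4 ≤ t * p := by nlinarith
  have e1 : -(c ^ 2 / 2) - 16 * m ^ 2 * Z ≤ 4 * c * L1 := by nlinarith [sq_nonneg (c + 4 * L1)]
  have e2 : 2 * c * (t * L2) ≤ c ^ 2 / 4 + 4 * t ^ 2 * (p * Z) := by
    nlinarith [sq_nonneg (c - 4 * t * L2), mul_le_mul_of_nonneg_left h2 (sq_nonneg t)]
  have e3 : 2 * c * (p * L3) ≤ c ^ 2 / 4 + 4 * p ^ 2 * (t * X) := by
    nlinarith [sq_nonneg (c - 4 * p * L3), mul_le_mul_of_nonneg_left h3 (sq_nonneg p)]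
  have e4 : c ^ 2 ≤ (4 * m - t * p) * c ^ 2 := by nlinarith [sq_nonneg c]
  have e5 : 16 * m ^ 2 * Z ≤ (t * p + 4) ^ 2 * Z := by
    refine mul_le_mul_of_nonneg_right ?_ hZ
    nlinarith
  have hp2 : 2 * p ≤ p ^ 2 := by nlinarith
  have k1 : 1 ≤ w - 2 * t - (t * p + 4) ^ 2 - 4 * t ^ 2 * p := by
    have : 0 ≤ (p ^ 2 - 2 * p) * t := mul_nonneg (by linarith) (by linarith)
    have q : 0 ≤ (p - 2) * (p - 2) * t :=
      mul_nonneg (mul_nonneg (by linarith) (by linarith)) (by linarith)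
    nlinarith
  have k2 : 1 ≤ 2 * (w - 1) - 2 * t - 2 * p - 4 * p ^ 2 * t := by
    have a1 : 0 ≤ p ^ 2 * t * (t - 2) := by
      apply mul_nonneg (by positivity); linarith
    have a2 : 0 ≤ p * t ^ 2 := by positivity
    have a3 : 0 ≤ p ^ 2 * t := by positivity
    nlinarith
  have hsum : (w - 2 * t - (t * p + 4) ^ 2 - 4 * t ^ 2 * p) * Z +
      (2 * (w - 1) - 2 * t - 2 * p - 4 * p ^ 2 * t) * X ≤ 0 := by nlinarith
  have hZ1 := mul_le_mul_of_nonneg_right k1 hZ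
  have hX1 := mul_le_mul_of_nonneg_right k2 hX
  have hZ0 : Z = 0 := by linarith
  have hX0 : X = 0 := by linarith
  have hsq : ∀ L B : ℝ, L ^ 2 ≤ B → B = 0 → L = 0 := fun L B h hB =>
    pow_eq_zero_iff (two_ne_zero) |>.1 (le_antisymm (h.trans hB.le) (sq_nonneg L))
  have l1 : L1 = 0 := hsq _ _ h1 (by rw [hZ0, mul_zero])
  have l2 : L2 = 0 := hsq _ _ h2 (by rw [hZ0, mul_zero])
  have l3 : L3 = 0 := hsq _ _ h3 (by rw [hX0, mul_zero])
  refine ⟨hX0, hZ0, hsq c 0 ?_ rfl⟩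
  rw [hX0, hZ0, l1, l2, l3] at hK
  linarith

set_option maxHeartbeats 1000000 in
/-- Deleting `m` edges (listed once each, as the ordered pairs in `D`) from the clique on `Aᶜ`
outweighs the contribution of the edges between `A` and `S` as soon as `4 * m > |A| * |S|` and `n`
is large: the top eigenvalue then drops below that of the clique on `Aᶜ`. -/
lemma eig_lt_of_missing_pairs {n : ℕ} (G : SimpleGraph (Fin n)) (μ : ℝ) (x : Fin n → ℝ)
    (hx : x ≠ 0) (he : IsQEig G μ x) (A S : Finset (Fin n)) (hAS : Disjoint A S)
    (hnon : ∀ i ∈ A, ∀ j, G.Adj i j → j ∈ A ∨ j ∈ S)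
    (D : Finset (Fin n × Fin n))
    (hD : ∀ q ∈ D, q.1 < q.2 ∧ q.1 ∉ A ∧ q.2 ∉ A ∧ ¬ G.Adj q.1 q.2)
    (t p m : ℝ) (hA : (A.card : ℝ) = t) (hS : (S.card : ℝ) = p) (hDm : (D.card : ℝ) = m)
    (ht : 2 ≤ t) (hp : 2 ≤ p) (hm1 : t * p + 1 ≤ 4 * m) (hm2 : 4 * m ≤ t * p + 4)
    (hn : p * (p + 4) * t ^ 2 + (p ^ 2 + 5 * p + 7) * t + p + 9 ≤ n - t) :
    μ < 2 * (n - t - 1) := by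
  by_contra hcon
  push Not at hcon
  set W := Aᶜ with hW
  set w : ℝ := n - t with hwdef
  have hwcard : (W.card : ℝ) = w := by
    rw [hW, Finset.card_compl, Nat.cast_sub (Finset.card_le_univ A), hA, Fintype.card_fin]
  have hwpos : 0 < w := by
    have : 0 ≤ p * (p + 4) * t ^ 2 + (p ^ 2 + 5 * p + 7) * t + p + 9 := by positivity
    nlinarith [mul_nonneg (show 0 ≤ p * (p + 4) by positivity) (sq_nonneg t)]
  have hSW : S ⊆ W := fun j hj => by
    rw [hW, Finset.mem_compl]; exact fun h => Finset.disjoint_left.1 hAS h hj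
  set c : ℝ := (∑ j ∈ W, x j) / w with hc
  set z : Fin n → ℝ := fun j => x j - c with hz
  have hxz : ∀ j, x j = c + z j := fun j => by simp [hz]
  have hsz : ∑ j ∈ W, z j = 0 := by
    simp only [hz, Finset.sum_sub_distrib, Finset.sum_const, nsmul_eq_mul, hwcard, hc]
    field_simp
    ring
  set X := ∑ i ∈ A, x i ^ 2 with hXd
  set Z := ∑ j ∈ W, z j ^ 2 with hZd
  set L1 := ∑ q ∈ D, (z q.1 + z q.2) with hL1
  set L2 := ∑ j ∈ S, z j with hL2
  set L3 := ∑ i ∈ A, x i with hL3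
  have hX0 : 0 ≤ X := Finset.sum_nonneg fun i _ => sq_nonneg _
  have hZ0 : 0 ≤ Z := Finset.sum_nonneg fun i _ => sq_nonneg _
  have hZS : ∑ j ∈ S, z j ^ 2 ≤ Z :=
    Finset.sum_le_sum_of_subset_of_nonneg hSW fun i _ _ => sq_nonneg _
  have hDW : ∀ q ∈ D, q.1 ∈ W ∧ q.2 ∈ W := fun q hq => by
    have := hD q hq
    simp only [hW, Finset.mem_compl]
    exact ⟨this.2.1, this.2.2.1⟩
  have b1 : L1 ^ 2 ≤ 2 * m ^ 2 * Z := by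
    have hpt : ∀ q ∈ D, (z q.1 + z q.2) ^ 2 ≤ 2 * Z := fun q hq => by
      have hne : q.1 ≠ q.2 := (hD q hq).1.ne
      have : ∑ j ∈ ({q.1, q.2} : Finset (Fin n)), z j ^ 2 ≤ Z := by
        refine Finset.sum_le_sum_of_subset_of_nonneg ?_ fun i _ _ => sq_nonneg _
        intro j hj
        rcases Finset.mem_insert.1 hj with h | h
        · rw [h]; exact (hDW q hq).1
        · rw [Finset.mem_singleton.1 h]; exact (hDW q hq).2
      rw [Finset.sum_pair hne] at this
      nlinarith [sq_nonneg (z q.1 - z q.2)]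
    calc L1 ^ 2 ≤ D.card * ∑ q ∈ D, (z q.1 + z q.2) ^ 2 := sq_sum_le_card_mul_sum_sq
      _ ≤ D.card * (D.card • (2 * Z)) := by
          exact mul_le_mul_of_nonneg_left (Finset.sum_le_card_nsmul _ _ _ hpt) (Nat.cast_nonneg _)
      _ = _ := by rw [nsmul_eq_mul, hDm]; ring
  have b2 : L2 ^ 2 ≤ p * Z := by
    calc L2 ^ 2 ≤ S.card * ∑ j ∈ S, z j ^ 2 := sq_sum_le_card_mul_sum_sq
      _ ≤ _ := by rw [hS]; gcongr
  have b3 : L3 ^ 2 ≤ t * X := by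
    rw [← hA]; exact sq_sum_le_card_mul_sum_sq
  have hnorm : ∑ i, x i ^ 2 = X + (w * c ^ 2 + Z) := by
    rw [← Finset.sum_add_sum_compl A]
    congr 1
    have : ∀ j ∈ W, x j ^ 2 = c ^ 2 + 2 * c * z j + z j ^ 2 := fun j _ => by rw [hxz j]; ring
    rw [Finset.sum_congr rfl this]
    rw [Finset.sum_add_distrib, Finset.sum_add_distrib, ← Finset.mul_sum, hsz, Finset.sum_const,
      nsmul_eq_mul, hwcard]
    ring
  set f : Fin n → Fin n → ℝ := fun i j => if G.Adj i j then (x i + x j) ^ 2 else 0 with hf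
  have hfsymm : ∀ i j, f i j = f j i := fun i j => by
    simp only [hf, G.adj_comm i j, add_comm (x i)]
  have hf0 : ∀ i j, f i j ≤ (x i + x j) ^ 2 := fun i j => by
    simp only [hf]; split_ifs
    · exact le_rfl
    · positivity
  have hsplit : 2 * μ * ∑ i, x i ^ 2 = ∑ i ∈ A, ∑ j ∈ A, f i j + 2 * ∑ i ∈ A, ∑ j ∈ W, f i j
      + ∑ i ∈ W, ∑ j ∈ W, f i j := by
    have hcomm : ∑ i ∈ W, ∑ j ∈ A, f i j = ∑ i ∈ A, ∑ j ∈ W, f i j := by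
      rw [Finset.sum_comm]
      exact Finset.sum_congr rfl fun i _ => Finset.sum_congr rfl fun j _ => hfsymm j i
    have hrow : ∀ i, ∑ j, f i j = ∑ j ∈ A, f i j + ∑ j ∈ W, f i j := fun i =>
      (Finset.sum_add_sum_compl A (fun j => f i j)).symm
    calc _ = ∑ i, ∑ j, f i j := he.sum_sq.symm
      _ = ∑ i ∈ A, ∑ j, f i j + ∑ i ∈ W, ∑ j, f i j := (Finset.sum_add_sum_compl A _).symm
      _ = _ := by
        rw [Finset.sum_congr rfl fun i _ => hrow i, Finset.sum_add_distrib,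
          Finset.sum_congr rfl fun i _ => hrow i, Finset.sum_add_distrib, hcomm]
        ring
  have hAA : ∑ i ∈ A, ∑ j ∈ A, f i j ≤ 4 * t * X := by
    calc _ ≤ ∑ i ∈ A, ∑ j ∈ A, (2 * x i ^ 2 + 2 * x j ^ 2) :=
          Finset.sum_le_sum fun i _ => Finset.sum_le_sum fun j _ =>
            (hf0 i j).trans (by nlinarith [sq_nonneg (x i - x j)])
      _ = _ := by
        simp only [Finset.sum_add_distrib, Finset.sum_const, nsmul_eq_mul, ← Finset.mul_sum, hA]
        ring
  have hAW : ∑ i ∈ A, ∑ j ∈ W, f i j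
      ≤ t * p * c ^ 2 + 2 * c * (p * L3 + t * L2) + 2 * p * X + 2 * t * Z := by
    calc _ = ∑ i ∈ A, ∑ j ∈ S, f i j := by
          refine Finset.sum_congr rfl fun i hi => (Finset.sum_subset hSW fun j hj hjS => ?_).symm
          have hjA : j ∉ A := Finset.mem_compl.1 hj
          simp only [hf]
          rw [if_neg fun hadj => (hnon i hi j hadj).elim hjA hjS]
      _ ≤ ∑ i ∈ A, ∑ j ∈ S, (c ^ 2 + 2 * c * x i + 2 * c * z j + 2 * x i ^ 2 + 2 * z j ^ 2) := by
          refine Finset.sum_le_sum fun i _ => Finset.sum_le_sum fun j _ => (hf0 i j).trans ?_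
          rw [hxz j]
          nlinarith [sq_nonneg (x i - z j)]
      _ = t * p * c ^ 2 + 2 * c * (p * L3 + t * L2) + 2 * p * X
            + 2 * t * ∑ j ∈ S, z j ^ 2 := by
          simp only [Finset.sum_add_distrib, Finset.sum_const, nsmul_eq_mul, ← Finset.mul_sum,
            hA, hS]
          ring
      _ ≤ _ := by gcongr
  have hWW : ∑ i ∈ W, ∑ j ∈ W, f i j
      ≤ 4 * c ^ 2 * w ^ 2 + 2 * w * Z - 4 * w * c ^ 2 - 4 * Z - 2 * (4 * m * c ^ 2 + 4 * c * L1) := by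
    have hind : ∀ g : Fin n × Fin n → ℝ,
        ∑ i ∈ W, ∑ j ∈ W, (if (i, j) ∈ D then g (i, j) else 0) = ∑ q ∈ D, g q := fun g => by
      rw [← Finset.sum_product' W W (fun i j => if (i, j) ∈ D then g (i, j) else 0),
        ← Finset.sum_filter]
      refine Finset.sum_congr ?_ fun _ _ => rfl
      ext q
      simp only [Finset.mem_filter, Finset.mem_product, Prod.mk.eta, and_iff_right_iff_imp]
      exact hDW q
    set g : Fin n × Fin n → ℝ := fun q => (x q.1 + x q.2) ^ 2 with hg
    -- Both orientations of a pair in `D` are missing from the sum over ordered pairs.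
    have hpt : ∀ i ∈ W, ∀ j ∈ W, f i j ≤ (x i + x j) ^ 2 - (if i = j then 4 * x i ^ 2 else 0)
        - (if (i, j) ∈ D then g (i, j) else 0) - (if (j, i) ∈ D then g (j, i) else 0) := by
      intro i _ j _
      have hlt1 : (i, j) ∈ D → i < j ∧ ¬ G.Adj i j := fun h => ⟨(hD _ h).1, (hD _ h).2.2.2⟩
      have hlt2 : (j, i) ∈ D → j < i ∧ ¬ G.Adj i j := fun h =>
        ⟨(hD _ h).1, fun h' => (hD _ h).2.2.2 h'.symm⟩
      by_cases h1 : (i, j) ∈ D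
      · have h2 : (j, i) ∉ D := fun h => lt_asymm (hlt1 h1).1 (hlt2 h).1
        simp [hf, hg, h1, h2, (hlt1 h1).2, (hlt1 h1).1.ne]
      · by_cases h2 : (j, i) ∈ D
        · simp [hf, hg, h1, h2, (hlt2 h2).2, (hlt2 h2).1.ne', add_comm (x j)]
        · by_cases h3 : i = j
          · subst h3
            have hfi : f i i = 0 := if_neg (G.loopless.irrefl i)
            rw [hfi, if_pos rfl, if_neg h1]
            exact le_of_eq (by ring)
          · simpa [h1, h2, h3] using hf0 i j
    have hswap : ∑ i ∈ W, ∑ j ∈ W, (if (j, i) ∈ D then g (j, i) else 0) = ∑ q ∈ D, g q := by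
      rw [Finset.sum_comm]; exact hind g
    have hgD : 4 * m * c ^ 2 + 4 * c * L1 ≤ ∑ q ∈ D, g q := by
      calc _ = ∑ q ∈ D, (4 * c ^ 2 + 4 * c * (z q.1 + z q.2)) := by
            rw [Finset.sum_add_distrib, Finset.sum_const, nsmul_eq_mul, hDm, ← Finset.mul_sum]
            ring
        _ ≤ _ := by
            refine Finset.sum_le_sum fun q _ => ?_
            change _ ≤ (x q.1 + x q.2) ^ 2
            rw [hxz q.1, hxz q.2]
            linarith [sq_nonneg (z q.1 + z q.2)]
    have hall : ∑ i ∈ W, ∑ j ∈ W, (x i + x j) ^ 2 = 4 * c ^ 2 * w ^ 2 + 2 * w * Z := by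
      have : ∀ i j, (x i + x j) ^ 2 = 4 * c ^ 2 + 4 * c * z i + 4 * c * z j + z i ^ 2 + z j ^ 2
          + 2 * z i * z j := fun i j => by rw [hxz i, hxz j]; ring
      simp only [this, Finset.sum_add_distrib, Finset.sum_const, nsmul_eq_mul, ← Finset.mul_sum,
        hwcard, hsz, mul_zero]
      ring
    have hdiag : ∑ i ∈ W, ∑ j ∈ W, (if i = j then 4 * x i ^ 2 else 0)
        = 4 * w * c ^ 2 + 4 * Z := by
      have : ∀ i ∈ W, ∑ j ∈ W, (if i = j then 4 * x i ^ 2 else 0)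
          = 4 * c ^ 2 + 8 * c * z i + 4 * z i ^ 2 := fun i hi => by
        rw [Finset.sum_ite_eq, if_pos hi, hxz i]; ring
      rw [Finset.sum_congr rfl this]
      simp only [Finset.sum_add_distrib, Finset.sum_const, nsmul_eq_mul, ← Finset.mul_sum,
        hwcard, hsz]
      ring
    have hfin := Finset.sum_le_sum fun i hi => Finset.sum_le_sum fun j hj => hpt i hi j hj
    simp only [Finset.sum_sub_distrib] at hfin
    rw [hall, hdiag, hind g, hswap] at hfin
    linarith
  have hN0 : 0 ≤ ∑ i, x i ^ 2 := Finset.sum_nonneg fun i _ => sq_nonneg _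
  have hlow : 4 * (w - 1) * ∑ i, x i ^ 2 ≤ 2 * μ * ∑ i, x i ^ 2 :=
    mul_le_mul_of_nonneg_right (by linarith) hN0
  rw [hsplit, hnorm] at hlow
  obtain ⟨hX', hZ', hc'⟩ := quad_definite X Z c L1 L2 L3 w t p m hX0 hZ0 ht hp hm1 hm2 hn b1 b2 b3
    (by nlinarith)
  rw [hX', hZ', hc'] at hnorm
  have hz0 : ∑ i, x i ^ 2 = 0 := by rw [hnorm]; ring
  apply hx
  ext i
  have := (Finset.sum_eq_zero_iff_of_nonneg fun i _ => sq_nonneg (x i)).1 hz0 i (mem_univ i)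
  simpa using this

/-! ### Two sides with more than `t` vertices -/

/-- The test-vector inequality at a vertex of the side of size `a`. Both `a` and `b` exceed `t`, and
in terms of the excesses `u = a - t - 1` and `v = b - t - 1` it reads
`t * p < 2 * t + p + 2 * u + v * (2 * t + p) + 2 * u * v`. -/
lemma side_ineq (a b p t n : ℝ) (hab : a + b + p = n) (ha : t + 1 ≤ a) (hb : t + 1 ≤ b)
    (ht : 2 ≤ t) (hp : 2 ≤ p)
    (hn : p * (p + 4) * t ^ 2 + (p ^ 2 + 5 * p + 8) * t + p + 9 ≤ n) :
    (a + p - 1) ^ 2 + (a - 1) * (a + p - 1) + p * (n - 1) < 2 * (n - t - 1) * (a + p - 1) := by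
  obtain ⟨u, rfl⟩ : ∃ u, a = t + 1 + u := ⟨a - (t + 1), by ring⟩
  obtain ⟨v, rfl⟩ : ∃ v, b = t + 1 + v := ⟨b - (t + 1), by ring⟩
  have hu : 0 ≤ u := by linarith
  have hv : 0 ≤ v := by linarith
  have h1 : 0 ≤ u * v := mul_nonneg hu hv
  have h2 : 0 ≤ v * (2 * t + p - 2) := mul_nonneg hv (by linarith)
  have h3 : t * p ≤ 2 * u + 2 * v := by
    have h4 : 0 ≤ p * (p + 4) * t ^ 2 := by positivity
    have h5 : 0 ≤ p ^ 2 * t := by positivity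
    nlinarith
  rw [← hab]
  nlinarith

/-- If both sides of the cut have more than `t` vertices, the degrees of
`K_p ∨ (K_a ∪ K_b)` are a test vector showing that every eigenvalue is less than
`2 * (n - t - 1)`. -/
lemma eig_lt_of_large_sides {n : ℕ} (G : SimpleGraph (Fin n)) (μ : ℝ) (x : Fin n → ℝ)
    (hx : x ≠ 0) (he : IsQEig G μ x) (A S B : Finset (Fin n)) (hAS : Disjoint A S)
    (hAB : Disjoint A B) (hSB : Disjoint S B) (hU : ∀ i, i ∈ A ∨ i ∈ S ∨ i ∈ B)
    (hnon : ∀ i ∈ A, ∀ j ∈ B, ¬ G.Adj i j)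
    (t p a b : ℝ) (hA : (A.card : ℝ) = a) (hS : (S.card : ℝ) = p) (hB : (B.card : ℝ) = b)
    (ht : 2 ≤ t) (hp : 2 ≤ p) (ha : t + 1 ≤ a) (hb : t + 1 ≤ b)
    (hn : p * (p + 4) * t ^ 2 + (p ^ 2 + 5 * p + 8) * t + p + 9 ≤ n) :
    μ < 2 * (n - t - 1) := by
  have hsum : ∀ g : Fin n → ℝ, ∑ i, g i = ∑ i ∈ A, g i + ∑ i ∈ S, g i + ∑ i ∈ B, g i := by
    intro g
    rw [← Finset.sum_union hAS, ← Finset.sum_union (by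
      rw [Finset.disjoint_union_left]; exact ⟨hAB, hSB⟩)]
    refine Finset.sum_congr ?_ fun _ _ => rfl
    ext i
    simp only [mem_univ, Finset.mem_union, true_iff]
    rcases hU i with h | h | h <;> simp [h]
  have hab : a + b + p = n := by
    have := hsum fun _ => 1
    simp only [Finset.sum_const, nsmul_eq_mul, mul_one, Finset.card_univ, Fintype.card_fin, hA, hS,
      hB] at this
    linarith
  set y : Fin n → ℝ := fun i => if i ∈ S then n - 1 else if i ∈ A then a + p - 1 else b + p - 1
    with hy
  have yA : ∀ i ∈ A, y i = a + p - 1 := fun i hi => by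
    simp [hy, hi, Finset.disjoint_left.1 hAS hi]
  have yS : ∀ i ∈ S, y i = n - 1 := fun i hi => by simp [hy, hi]
  have yB : ∀ i ∈ B, y i = b + p - 1 := fun i hi => by
    simp [hy, Finset.disjoint_right.1 hSB hi, Finset.disjoint_right.1 hAB hi]
  have hpos : ∀ i, 0 < y i := fun i => by
    rcases hU i with h | h | h
    · rw [yA i h]; linarith
    · rw [yS i h]; linarith
    · rw [yB i h]; linarith
  have sA : ∀ v : ℝ, ∑ j ∈ A, (v + y j) = a * (v + (a + p - 1)) := fun v => by
    rw [Finset.sum_congr rfl fun j hj => by rw [yA j hj], Finset.sum_const, nsmul_eq_mul, hA]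
  have sS : ∀ v : ℝ, ∑ j ∈ S, (v + y j) = p * (v + (n - 1)) := fun v => by
    rw [Finset.sum_congr rfl fun j hj => by rw [yS j hj], Finset.sum_const, nsmul_eq_mul, hS]
  have sB : ∀ v : ℝ, ∑ j ∈ B, (v + y j) = b * (v + (b + p - 1)) := fun v => by
    rw [Finset.sum_congr rfl fun j hj => by rw [yB j hj], Finset.sum_const, nsmul_eq_mul, hB]
  have hrow : ∀ i, ∀ T : Finset (Fin n), i ∈ T → (∀ j, G.Adj i j → j ∈ T) →
      ∑ j, (if G.Adj i j then y i + y j else 0) ≤ ∑ j ∈ T, (y i + y j) - 2 * y i := by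
    intro i T hi hT
    have h1 : ∑ j, (if G.Adj i j then y i + y j else 0)
        ≤ ∑ j ∈ T.erase i, (y i + y j) := by
      rw [← Finset.sum_filter]
      refine Finset.sum_le_sum_of_subset_of_nonneg ?_ fun j _ _ =>
        (add_pos (hpos i) (hpos j)).le
      intro j hj
      have hj' := (Finset.mem_filter.1 hj).2
      exact Finset.mem_erase.2 ⟨hj'.ne', hT j hj'⟩
    have h2 := Finset.add_sum_erase T (fun j => y i + y j) hi
    linarith
  refine eig_lt_of_testVector G μ _ x y hx he hpos fun i => ?_
  rcases hU i with h | h | h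
  · have := hrow i (A ∪ S) (Finset.mem_union_left _ h) fun j hj => by
      rcases hU j with h' | h' | h'
      · exact Finset.mem_union_left _ h'
      · exact Finset.mem_union_right _ h'
      · exact absurd hj (hnon i h j h')
    rw [Finset.sum_union hAS, sA, sS, yA i h] at this
    rw [yA i h]
    have hs := side_ineq a b p t n hab ha hb ht hp hn
    nlinarith
  · have := hrow i Finset.univ (mem_univ i) fun j _ => mem_univ j
    rw [hsum (fun j => y i + y j), sA, sS, sB, yS i h] at this
    rw [yS i h]
    have h1 : 0 ≤ (a - (t + 1)) * (b - (t + 1)) := mul_nonneg (by linarith) (by linarith)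
    have h2 : t * (n - 1) < a * b := by
      have e : (t + 1) * (p + t + 1) - t < (n : ℝ) := by
        have h3 : 0 ≤ p * t := by positivity
        have h5 : 2 * t ^ 2 ≤ p * t ^ 2 := by nlinarith
        have h6 : 0 ≤ p ^ 2 * t ^ 2 := by positivity
        have h7 : 0 ≤ p ^ 2 * t := by positivity
        nlinarith
      nlinarith
    nlinarith
  · have := hrow i (B ∪ S) (Finset.mem_union_left _ h) fun j hj => by
      rcases hU j with h' | h' | h'
      · exact absurd hj.symm (hnon j h' i h)
      · exact Finset.mem_union_right _ h'
      · exact Finset.mem_union_left _ h'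
    rw [Finset.sum_union hSB.symm, sB, sS, yB i h] at this
    rw [yB i h]
    have hs := side_ineq b a p t n (by linarith) hb ha ht hp hn
    nlinarith

/-! ### Vertex cuts and the family of exceptional graphs -/

/-- A cut of fewer than `k` vertices witnessing that a large graph is not `k`-connected. -/
lemma exists_cut {n k : ℕ} (G : SimpleGraph (Fin n)) (hkn : k < n) (h : ¬ IsKConnected G k) :
    ∃ S A B : Finset (Fin n), S.card < k ∧ A.Nonempty ∧ B.Nonempty ∧ Disjoint A S ∧
      Disjoint A B ∧ Disjoint S B ∧ (∀ i, i ∈ A ∨ i ∈ S ∨ i ∈ B) ∧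
      ∀ i ∈ A, ∀ j ∈ B, ¬ G.Adj i j := by
  simp only [IsKConnected, Fintype.card_fin, hkn, true_and, not_forall] at h
  obtain ⟨S, hS, hcon⟩ := h
  set H := G.induce ((↑S : Set (Fin n))ᶜ) with hH
  obtain ⟨v0, hv0⟩ : ∃ v, v ∉ S := by
    by_contra hall
    push Not at hall
    have : S = Finset.univ := Finset.eq_univ_iff_forall.2 hall
    rw [this, Finset.card_univ, Fintype.card_fin] at hS
    omega
  have hpre : ¬ H.Preconnected := fun hp => hcon
    { preconnected := hp, nonempty := ⟨⟨v0, by simpa using hv0⟩⟩ }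
  simp only [SimpleGraph.Preconnected, not_forall] at hpre
  obtain ⟨u, v, huv⟩ := hpre
  refine ⟨S, Finset.univ.filter fun i => ∃ hi : i ∉ S, H.Reachable u ⟨i, by simpa using hi⟩,
    Finset.univ.filter fun i => ∃ hi : i ∉ S, ¬ H.Reachable u ⟨i, by simpa using hi⟩, hS,
    ⟨u.1, ?_⟩, ⟨v.1, ?_⟩, ?_, ?_, ?_, ?_, ?_⟩
  · simp only [mem_filter, mem_univ, true_and]
    exact ⟨fun h => u.2 (Finset.mem_coe.2 h), SimpleGraph.Reachable.refl _⟩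
  · simp only [mem_filter, mem_univ, true_and]
    exact ⟨fun h => v.2 (Finset.mem_coe.2 h), huv⟩
  · rw [Finset.disjoint_left]
    intro i hi hiS
    simp only [mem_filter, mem_univ, true_and] at hi
    exact hi.1 hiS
  · rw [Finset.disjoint_left]
    intro i hi hi'
    simp only [mem_filter, mem_univ, true_and] at hi hi'
    exact hi'.2 hi.2
  · rw [Finset.disjoint_left]
    intro i hiS hi
    simp only [mem_filter, mem_univ, true_and] at hi
    exact hi.1 hiS
  · intro i
    simp only [mem_filter, mem_univ, true_and]
    by_cases hi : i ∈ S
    · exact Or.inr (Or.inl hi)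
    · by_cases hr : H.Reachable u ⟨i, by simpa using hi⟩
      · exact Or.inl ⟨hi, hr⟩
      · exact Or.inr (Or.inr ⟨hi, hr⟩)
  · intro i hi j hj hadj
    simp only [mem_filter, mem_univ, true_and] at hi hj
    obtain ⟨hi, hri⟩ := hi
    obtain ⟨hj, hrj⟩ := hj
    refine hrj (hri.trans (SimpleGraph.Adj.reachable ?_))
    simpa [hH] using hadj

lemma degree_add_one_le {n : ℕ} (G : SimpleGraph (Fin n)) (T : Finset (Fin n)) (i : Fin n)
    (hi : i ∈ T) (hT : ∀ j, G.Adj i j → j ∈ T) : G.degree i + 1 ≤ T.card := by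
  rw [← G.card_neighborFinset_eq_degree, ← Finset.card_erase_add_one hi]
  refine Nat.add_le_add_right (Finset.card_le_card fun j hj => ?_) 1
  have hj' := (G.mem_neighborFinset i j).1 hj
  exact Finset.mem_erase.2 ⟨hj'.ne', hT j hj'⟩

/-- Vertices can be moved from the larger side of a cut into the cut, so that it has exactly
`p` vertices. -/
lemma exists_cut_eq {n p t δ : ℕ} (G : SimpleGraph (Fin n)) (hδ : δ + 1 = t + p)
    (hdeg : ∀ i, δ ≤ G.degree i) (hn : 2 * t + 2 * p + 2 ≤ n) (h : ¬ IsKConnected G (p + 1)) :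
    ∃ S A B : Finset (Fin n), S.card = p ∧ t ≤ A.card ∧ t + 1 ≤ B.card ∧ Disjoint A S ∧
      Disjoint A B ∧ Disjoint S B ∧ (∀ i, i ∈ A ∨ i ∈ S ∨ i ∈ B) ∧
      ∀ i ∈ A, ∀ j ∈ B, ¬ G.Adj i j := by
  obtain ⟨S, A, B, hS, hA, hB, hAS, hAB, hSB, hU, hnon⟩ := exists_cut G (by omega) h
  wlog hle : A.card ≤ B.card generalizing A B
  · exact this B A hB hA hSB.symm hAB.symm hAS.symm
      (fun i => by rcases hU i with h | h | h <;> simp [h])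
      (fun i hi j hj hadj => hnon j hj i hi hadj.symm) (by omega)
  have hcard : A.card + S.card + B.card = n := by
    rw [← Finset.card_union_of_disjoint hAS, ← Finset.card_union_of_disjoint (by
      rw [Finset.disjoint_union_left]; exact ⟨hAB, hSB⟩)]
    have : A ∪ S ∪ B = Finset.univ := by
      ext i
      simp only [mem_univ, Finset.mem_union, iff_true]
      rcases hU i with h | h | h <;> simp [h]
    rw [this, Finset.card_univ, Fintype.card_fin]
  have hAcard : δ + 1 ≤ A.card + S.card := by
    obtain ⟨i, hi⟩ := hA
    have h1 := degree_add_one_le G (A ∪ S) i (Finset.mem_union_left _ hi) fun j hj => by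
      rcases hU j with h' | h' | h'
      · exact Finset.mem_union_left _ h'
      · exact Finset.mem_union_right _ h'
      · exact absurd hj (hnon i hi j h')
    rw [Finset.card_union_of_disjoint hAS] at h1
    have := hdeg i
    omega
  obtain ⟨C, hCB, hC⟩ := Finset.exists_subset_card_eq (s := B) (n := p - S.card) (by omega)
  have hBC : (B \ C).card = B.card - (p - S.card) := by rw [Finset.card_sdiff_of_subset hCB, hC]
  refine ⟨S ∪ C, A, B \ C, ?_, by omega, by omega, ?_, ?_, ?_, ?_, ?_⟩
  · rw [Finset.card_union_of_disjoint (Finset.disjoint_of_subset_right hCB hSB), hC]; omega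
  · rw [Finset.disjoint_union_right]
    exact ⟨hAS, Finset.disjoint_of_subset_right hCB hAB⟩
  · exact Finset.disjoint_of_subset_right Finset.sdiff_subset hAB
  · rw [Finset.disjoint_union_left]
    exact ⟨Finset.disjoint_of_subset_right Finset.sdiff_subset hSB, Finset.disjoint_sdiff⟩
  · intro i
    by_cases hiC : i ∈ C
    · simp [hiC]
    · rcases hU i with h | h | h <;> simp [h, hiC]
  · exact fun i hi j hj => hnon i hi j (Finset.sdiff_subset hj)

/-- A relabelling of the vertices taking `S` to the first `p` labels and `A` to the next `t`. -/
lemma exists_relabel {n p t : ℕ} (S A : Finset (Fin n)) (hAS : Disjoint A S)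
    (hS : S.card = p) (hA : A.card = t) :
    ∃ e : Fin n ≃ Fin n, (∀ i, i ∈ S ↔ (e i : ℕ) < p) ∧
      ∀ i, i ∈ A ↔ p ≤ (e i : ℕ) ∧ (e i : ℕ) < p + t := by
  have hle : p + t ≤ n := by
    rw [← hS, ← hA, add_comm, ← Finset.card_union_of_disjoint hAS]
    simpa using Finset.card_le_univ (A ∪ S)
  let f : Fin n → Fin 3 := fun i => if i ∈ S then 0 else if i ∈ A then 1 else 2
  let g : Fin n → Fin 3 := fun j => if (j : ℕ) < p then 0 else if (j : ℕ) < p + t then 1 else 2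
  have hlt : ∀ m ≤ n, (Finset.univ.filter fun j : Fin n => (j : ℕ) < m).card = m := by
    intro m hm
    rw [Fin.card_filter_val_lt]; omega
  have f0 : (Finset.univ.filter fun i => f i = 0) = S := by
    ext i; simp only [f, mem_filter, mem_univ, true_and]; split_ifs <;> simp_all
  have f1 : (Finset.univ.filter fun i => f i = 1) = A := by
    ext i; simp only [f, mem_filter, mem_univ, true_and]
    by_cases hi : i ∈ S
    · simp [hi, Finset.disjoint_right.1 hAS hi]
    · by_cases hi' : i ∈ A <;> simp [hi, hi']
  have f2 : (Finset.univ.filter fun i => f i = 2) = (A ∪ S)ᶜ := by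
    ext i; simp only [f, mem_filter, mem_univ, true_and, mem_compl, Finset.mem_union]
    split_ifs <;> simp_all
  have g0 : (Finset.univ.filter fun i => g i = 0) =
      Finset.univ.filter fun j : Fin n => (j : ℕ) < p := by
    ext i; simp only [g, mem_filter, mem_univ, true_and]; split_ifs <;> simp_all
  have g1 : (Finset.univ.filter fun i => g i = 1) =
      (Finset.univ.filter fun j : Fin n => (j : ℕ) < p + t) \
      (Finset.univ.filter fun j : Fin n => (j : ℕ) < p) := by
    ext i; simp only [g, mem_filter, mem_univ, true_and, mem_sdiff]; split_ifs <;> simp_all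
  have g2 : (Finset.univ.filter fun i => g i = 2) =
      (Finset.univ.filter fun j : Fin n => (j : ℕ) < p + t)ᶜ := by
    ext i; simp only [g, mem_filter, mem_univ, true_and, mem_compl]
    split_ifs <;> simp <;> omega
  have hcard : ∀ c : Fin 3, Fintype.card {i // f i = c} = Fintype.card {j // g j = c} := by
    intro c
    rw [Fintype.card_subtype, Fintype.card_subtype]
    fin_cases c
    · simp only [Fin.zero_eta]
      rw [f0, g0, hlt p (by omega), hS]
    · simp only [Fin.mk_one]
      rw [f1, g1, Finset.card_sdiff_of_subset, hlt _ hle, hlt p (by omega), hA]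
      · omega
      · intro j; simp only [mem_filter, mem_univ, true_and]; omega
    · simp only [Fin.reduceFinMk]
      rw [f2, g2, Finset.card_compl, Finset.card_compl, hlt _ hle,
        Finset.card_union_of_disjoint hAS, hA, hS, add_comm]
  let e := Equiv.ofFiberEquiv (f := f) (g := g) fun c => Fintype.equivOfCardEq (hcard c)
  have he : ∀ i, g (e i) = f i := fun i => Equiv.ofFiberEquiv_map _ i
  refine ⟨e, fun i => ?_, fun i => ?_⟩
  · have h1 : i ∈ S ↔ f i = 0 := by rw [← f0]; simp
    rw [h1, ← he i]
    simp only [g]; split_ifs <;> simp_all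
  · have h1 : i ∈ A ↔ f i = 1 := by rw [← f1]; simp
    rw [h1, ← he i]
    simp only [g]; split_ifs <;> simp <;> omega

/-- Recognition of a member of the family from a cut whose side `A` is completely joined to
itself and to the cut `S`. The non-adjacent pairs of vertices outside `A`, whose number is bounded
by `hD`, become the removed edges. -/
lemma memA1_of_cut {n p t δ : ℕ} (G : SimpleGraph (Fin n)) (S A : Finset (Fin n))
    (hδ : δ + 1 = t + p) (ht : 2 ≤ t) (hAS : Disjoint A S) (hS : S.card = p) (hA : A.card = t)
    (hadj : ∀ i ∈ A, ∀ j, G.Adj i j ↔ j ≠ i ∧ (j ∈ A ∨ j ∈ S))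
    (hD : (Finset.univ.filter fun q : Fin n × Fin n =>
      q.1 < q.2 ∧ q.1 ∉ A ∧ q.2 ∉ A ∧ ¬ G.Adj q.1 q.2).card ≤ t * p / 4) :
    memA1 n (p + 1) δ G := by
  obtain ⟨e, heS, heA⟩ := exists_relabel S A hAS hS hA
  set D := Finset.univ.filter fun q : Fin n × Fin n =>
      q.1 < q.2 ∧ q.1 ∉ A ∧ q.2 ∉ A ∧ ¬ G.Adj q.1 q.2 with hDdef
  have hδ' : δ + 1 = p + t := by omega
  have hgA : ∀ i j, (graphA n (p + 1) δ).Adj (e i) (e j) ↔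
      i ≠ j ∧ ((i ∈ A → j ∈ A ∨ j ∈ S) ∧ (j ∈ A → i ∈ A ∨ i ∈ S)) := by
    intro i j
    simp only [graphA, SimpleGraph.fromRel_adj, heA, heS, ne_eq, e.injective.eq_iff,
      Nat.add_sub_cancel, hδ']
    refine and_congr_right fun _ => ?_
    omega
  have hmemD : ∀ i j, i ≠ j → i ∉ A → j ∉ A → ¬ G.Adj i j →
      s(e i, e j) ∈ D.image fun q => s(e q.1, e q.2) := by
    intro i j hij hi hj hn
    rw [Finset.mem_image]
    rcases lt_or_gt_of_ne hij with h | h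
    · exact ⟨(i, j), by simp [hDdef, h, hi, hj, hn], rfl⟩
    · exact ⟨(j, i), by simp [hDdef, h, hi, hj, G.adj_comm j i, hn], Sym2.eq_swap⟩
  refine ⟨D.image fun q => s(e q.1, e q.2), ⟨?_, ?_⟩, ?_, ⟨⟨e, ?_⟩⟩⟩
  · intro d hd
    obtain ⟨q, hq, rfl⟩ := Finset.mem_image.1 (Finset.mem_coe.1 hd)
    simp only [hDdef, mem_filter, mem_univ, true_and] at hq
    rw [SimpleGraph.mem_edgeSet, hgA]
    exact ⟨hq.1.ne, fun h => absurd h hq.2.1, fun h => absurd h hq.2.2.1⟩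
  · intro d hd v hv
    obtain ⟨q, hq, rfl⟩ := Finset.mem_image.1 hd
    simp only [hDdef, mem_filter, mem_univ, true_and] at hq
    have key : ∀ i, i ∉ A → inY n (p + 1) (e i) ∨ inZ n δ (e i) := fun i hi => by
      rw [heA] at hi
      simp only [inY, inZ]
      omega
    rcases Sym2.mem_iff.1 hv with rfl | rfl
    · exact key _ hq.2.1
    · exact key _ hq.2.2.1
  · refine Finset.card_image_le.trans (hD.trans_eq ?_)
    congr 2
    omega
  · intro i j
    rw [SimpleGraph.deleteEdges_adj, hgA]
    have hno : s(e i, e j) ∈ (↑(D.image fun q => s(e q.1, e q.2)) : Set (Sym2 (Fin n))) →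
        i ∉ A ∧ j ∉ A ∧ ¬ G.Adj i j := by
      intro hd
      obtain ⟨q, hq, hqe⟩ := Finset.mem_image.1 (Finset.mem_coe.1 hd)
      simp only [hDdef, mem_filter, mem_univ, true_and] at hq
      simp only [Sym2.eq_iff, e.injective.eq_iff] at hqe
      rcases hqe with ⟨h1, h2⟩ | ⟨h1, h2⟩
      · rw [← h1, ← h2]; exact hq.2
      · rw [← h1, ← h2]; exact ⟨hq.2.2.1, hq.2.1, fun h => hq.2.2.2 h.symm⟩
    constructor
    · rintro ⟨⟨hij, h1, h2⟩, h3⟩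
      by_cases hi : i ∈ A
      · exact (hadj i hi j).2 ⟨hij.symm, h1 hi⟩
      · by_cases hj : j ∈ A
        · exact ((hadj j hj i).2 ⟨hij, h2 hj⟩).symm
        · by_contra hn
          exact h3 (Finset.mem_coe.2 (hmemD i j hij hi hj hn))
    · intro h
      exact ⟨⟨h.ne, fun hi => ((hadj i hi j).1 h).2, fun hj => ((hadj j hj i).1 h.symm).2⟩,
        fun hd => (hno hd).2.2 h⟩

/-- Theorem 1.5. If `G` is connected of order `n` with minimum degree
`δ(G) = δ ≥ k ≥ 3`, `n ≥ F(k,δ)` and `q(G) ≥ 2(n-δ+k-3)`, then `G` is `k`-connected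
unless `G ∈ 𝒜₁(n,k,δ)`. -/
theorem stmt0 (n k δ : ℕ) (hk : 3 ≤ k) (hδk : k ≤ δ)
    (G : SimpleGraph (Fin n)) (hconn : G.Connected)
    (hmin : G.minDegree = δ)
    (hn : (n : ℝ) ≥ F k δ)
    (hq : qIndex G ≥ 2 * ((n : ℝ) - δ + k - 3)) :
    IsKConnected G k ∨ memA1 n k δ G := by
  obtain ⟨p, rfl⟩ : ∃ p, k = p + 1 := ⟨k - 1, by omega⟩
  obtain ⟨t, ht⟩ : ∃ t, δ + 1 = t + p := ⟨δ + 1 - p, by omega⟩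
  have ht2 : 2 ≤ t := by omega
  have hp2 : 2 ≤ p := by omega
  have htR : (2 : ℝ) ≤ t := by exact_mod_cast ht2
  have hpR : (2 : ℝ) ≤ p := by exact_mod_cast hp2
  have hδR : (δ : ℝ) = t + p - 1 := by
    have : (δ : ℝ) + 1 = t + p := by exact_mod_cast ht
    linarith
  -- In terms of `p = k - 1` and `t = δ - k + 2` the polynomial has positive coefficients.
  have hF : (p : ℝ) * (p + 4) * t ^ 2 + (p ^ 2 + 5 * p + 8) * t + p + 9 ≤ n := by
    refine le_trans (le_of_eq ?_) hn
    simp only [F, hδR]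
    push_cast
    ring
  have hFn : p * (p + 4) * t ^ 2 + (p ^ 2 + 5 * p + 8) * t + p + 9 ≤ n := by exact_mod_cast hF
  have hbig : 2 * t + 2 * p + 2 ≤ n := by nlinarith [Nat.zero_le (p * (p + 4) * t ^ 2)]
  have hdeg : ∀ i, δ ≤ G.degree i := fun i => by
    rw [← hmin]; exact G.minDegree_le_degree i
  by_cases hK : IsKConnected G (p + 1)
  · exact Or.inl hK
  right
  obtain ⟨S, A, B, hS, hA, hB, hAS, hAB, hSB, hU, hnon⟩ := exists_cut_eq G ht hdeg hbig hK
  have hbigR : (2 : ℝ) * t + 2 * p + 2 ≤ n := by exact_mod_cast hbig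
  have hq' : 2 * ((n : ℝ) - t - 1) ≤ qIndex G := by
    refine le_trans (le_of_eq ?_) hq
    rw [hδR]; push_cast; ring
  obtain ⟨μ, x, hμ, hx, he⟩ := exists_eig_of_le_qIndex G _ (by linarith) hq'
  have hAt : A.card = t := by
    by_contra hne
    have hA' : t + 1 ≤ A.card := by omega
    refine absurd (eig_lt_of_large_sides G μ x hx he A S B hAS hAB hSB hU hnon t p _ _ rfl
      (by rw [hS]) rfl htR hpR (by exact_mod_cast hA') (by exact_mod_cast hB) hF) (not_lt.2 hμ)
  have hnb : ∀ i ∈ A, ∀ j, G.Adj i j → j ∈ A ∨ j ∈ S := fun i hi j hj => by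
    rcases hU j with h | h | h
    · exact Or.inl h
    · exact Or.inr h
    · exact absurd hj (hnon i hi j h)
  -- The minimum degree leaves a vertex of `A` no choice of neighbours.
  have hadj : ∀ i ∈ A, ∀ j, G.Adj i j ↔ j ≠ i ∧ (j ∈ A ∨ j ∈ S) := fun i hi j => by
    have hsub : G.neighborFinset i ⊆ (A ∪ S).erase i := fun l hl => by
      have hl' := (G.mem_neighborFinset i l).1 hl
      exact Finset.mem_erase.2 ⟨hl'.ne', Finset.mem_union.2 (hnb i hi l hl')⟩
    have heq : G.neighborFinset i = (A ∪ S).erase i := by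
      refine Finset.eq_of_subset_of_card_le hsub ?_
      rw [Finset.card_erase_of_mem (Finset.mem_union_left _ hi),
        Finset.card_union_of_disjoint hAS, G.card_neighborFinset_eq_degree]
      have := hdeg i
      omega
    rw [← G.mem_neighborFinset, heq, Finset.mem_erase, Finset.mem_union]
  refine memA1_of_cut G S A ht ht2 hAS hS hAt hadj ?_
  by_contra hcard
  push Not at hcard
  obtain ⟨D, hDsub, hDcard⟩ := Finset.exists_subset_card_eq (Nat.succ_le_of_lt hcard)
  have hm1 : t * p + 1 ≤ 4 * D.card := by omega
  have hm2 : 4 * D.card ≤ t * p + 4 := by omega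
  refine absurd (eig_lt_of_missing_pairs G μ x hx he A S hAS hnb D
    (fun q hq => (Finset.mem_filter.1 (hDsub hq)).2) t p D.card (by rw [hAt]) (by rw [hS]) rfl
    htR hpR (by exact_mod_cast hm1) (by exact_mod_cast hm2) (by linarith)) (not_lt.2 hμ)

end QGraph
end

section
/- Let G be a graph of order n ≥ 2 with m edges. Then the Q-index satisfies q(G) ≤ 2m/(n−1) + n − 2. -/
/-!
The proof combines two classical facts. Let `d v` be the degree of `v` and let
`S u = ∑ d v` over the neighbours `v` of `u`.

* `exists_mul_degree_le`: a positive eigenvalue `μ` of `Q(G)` satisfies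
  `μ * d u ≤ d u ^ 2 + S u` for some non-isolated vertex `u`. This is the row-sum bound for
  `D⁻¹ Q D`: evaluate the eigenvalue equation where `|x u| / d u` is maximal.
* `degree_sq_add_le`: for every non-isolated vertex `u`,
  `(n - 1) (d u ^ 2 + S u) ≤ d u (2 m + (n - 1) (n - 2))`. Here `2 m - S u` is the degree sum over
  the non-neighbours of `u`; it is at least `d u` (the contribution of `u` itself), and at least
  `S u - d u (d u - 1)`, since at most `d u (d u - 1)` of the `S u` edge ends at neighbours of `u`
  belong to edges inside the neighbourhood. The rest is elementary algebra.
-/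

open Finset Matrix

attribute [local instance] Classical.propDecidable

namespace QGraph

variable {V : Type*} [Fintype V] [DecidableEq V]

/-- The degree sum over the neighbours of `u`. -/
noncomputable def nbrDegreeSum (G : SimpleGraph V) (u : V) : ℝ :=
  ∑ v, (if G.Adj u v then (G.degree v : ℝ) else 0)

lemma degree_eq_sum (G : SimpleGraph V) (v : V) :
    (G.degree v : ℝ) = ∑ w, (if G.Adj v w then (1 : ℝ) else 0) := by
  rw [Finset.sum_boole, ← SimpleGraph.card_neighborFinset_eq_degree]
  congr 2
  ext w
  simp

lemma qMatrix_mulVec (G : SimpleGraph V) (x : V → ℝ) (u : V) :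
    (qMatrix G *ᵥ x) u = G.degree u * x u + ∑ v, (if G.Adj u v then x v else 0) := by
  simp [qMatrix, Matrix.mulVec, dotProduct, add_mul, Finset.sum_add_distrib]

lemma exists_mul_degree_le (G : SimpleGraph V) {μ : ℝ} (hμ : 0 < μ) {x : V → ℝ} (hx : x ≠ 0)
    (h : qMatrix G *ᵥ x = μ • x) :
    ∃ u, 0 < G.degree u ∧ μ * G.degree u ≤ (G.degree u : ℝ) ^ 2 + nbrDegreeSum G u := by
  have heq : ∀ u, μ * x u = G.degree u * x u + ∑ v, (if G.Adj u v then x v else 0) := by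
    intro u
    rw [← qMatrix_mulVec, h]
    simp
  -- An eigenvector for a nonzero eigenvalue vanishes at isolated vertices.
  have hiso : ∀ u, G.degree u = 0 → x u = 0 := by
    intro u hu
    have hno : ∀ v, ¬ G.Adj u v := fun v hv =>
      absurd ((G.degree_pos_iff_exists_adj u).2 ⟨v, hv⟩) (by omega)
    have := heq u
    simp only [hu, hno, if_false, Finset.sum_const_zero, Nat.cast_zero, zero_mul, add_zero] at this
    exact (mul_eq_zero.1 this).resolve_left hμ.ne'
  obtain ⟨z, hz⟩ : ∃ z, x z ≠ 0 := by
    by_contra! hc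
    exact hx (funext hc)
  have hposdeg : ∀ u, x u ≠ 0 → (0 : ℝ) < G.degree u := fun u hu => by
    have : G.degree u ≠ 0 := fun h0 => hu (hiso u h0)
    exact_mod_cast Nat.pos_of_ne_zero this
  -- At isolated vertices the quotient is `0 / 0 = 0`, so they do not affect the maximum.
  obtain ⟨u, -, hu⟩ := Finset.exists_max_image Finset.univ (fun v => |x v| / (G.degree v : ℝ))
    ⟨z, Finset.mem_univ z⟩
  set M := |x u| / (G.degree u : ℝ) with hM
  have hMpos : 0 < M :=
    lt_of_lt_of_le (div_pos (abs_pos.2 hz) (hposdeg z hz)) (hu z (Finset.mem_univ z))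
  have hxu : x u ≠ 0 := by
    intro h0
    simp [hM, h0] at hMpos
  have hdu := hposdeg u hxu
  have hbound : ∀ v, |x v| ≤ M * G.degree v := by
    intro v
    by_cases hv : x v = 0
    · rw [hv, abs_zero]
      positivity
    · exact (div_le_iff₀ (hposdeg v hv)).1 (hu v (Finset.mem_univ v))
  have hxM : |x u| = M * G.degree u := by
    rw [hM]
    field_simp
  have hsum : |∑ v, (if G.Adj u v then x v else 0)| ≤ M * nbrDegreeSum G u := by
    refine (Finset.abs_sum_le_sum_abs _ _).trans ?_
    rw [nbrDegreeSum, Finset.mul_sum]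
    refine Finset.sum_le_sum fun v _ => ?_
    split_ifs
    · exact hbound v
    · simp
  refine ⟨u, by exact_mod_cast hdu, ?_⟩
  have h1 : μ * |x u| ≤ G.degree u * |x u| + M * nbrDegreeSum G u := by
    calc μ * |x u| = |μ * x u| := by rw [abs_mul, abs_of_pos hμ]
      _ ≤ |G.degree u * x u| + |∑ v, (if G.Adj u v then x v else 0)| := by
        rw [heq u]
        exact abs_add_le _ _
      _ ≤ _ := by
        rw [abs_mul, abs_of_pos hdu]
        linarith
  rw [hxM] at h1
  refine le_of_mul_le_mul_left ?_ hMpos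
  linarith

/-- The vertex `u` is one of its own non-neighbours. -/
lemma nbrDegreeSum_add_degree_le (G : SimpleGraph V) (u : V) :
    nbrDegreeSum G u + G.degree u ≤ ∑ v, (G.degree v : ℝ) := by
  have h : (G.degree u : ℝ) = ∑ v, (if u = v then (G.degree v : ℝ) else 0) := by simp
  rw [h, nbrDegreeSum, ← Finset.sum_add_distrib]
  refine Finset.sum_le_sum fun v _ => ?_
  by_cases huv : u = v
  · subst huv
    simp
  · simp only [huv, if_false, add_zero]
    split_ifs
    · exact le_rfl
    · positivity

/-- At most `d (d - 1)` of the edge ends at neighbours of `u`, where `d = d(u)`, belong to edges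
inside the neighbourhood; every other one is matched by an edge end at a non-neighbour. -/
lemma two_nbrDegreeSum_le (G : SimpleGraph V) (u : V) :
    2 * nbrDegreeSum G u ≤
      ∑ v, (G.degree v : ℝ) + (G.degree u : ℝ) * ((G.degree u : ℝ) - 1) := by
  set a : V → V → ℝ := fun v w => if G.Adj v w then 1 else 0 with ha
  have ha0 : ∀ v w, 0 ≤ a v w := fun v w => by simp only [ha]; split_ifs <;> norm_num
  have ha1 : ∀ v w, a v w ≤ 1 := fun v w => by simp only [ha]; split_ifs <;> norm_num
  have hsymm : ∀ v w, a v w = a w v := fun v w => by simp only [ha, G.adj_comm]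
  have hdeg : ∀ v, (G.degree v : ℝ) = ∑ w, a v w := degree_eq_sum G
  have hS : nbrDegreeSum G u = ∑ v, ∑ w, a u v * a v w := by
    rw [nbrDegreeSum]
    refine Finset.sum_congr rfl fun v _ => ?_
    rw [← Finset.mul_sum, ← hdeg]
    simp [ha]
  have hS' : nbrDegreeSum G u = ∑ v, ∑ w, a u w * a v w := by
    rw [hS, Finset.sum_comm]
    exact Finset.sum_congr rfl fun v _ => Finset.sum_congr rfl fun w _ => by rw [hsymm w v]
  -- The left-hand side counts the ordered adjacent pairs inside the neighbourhood of `u`.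
  have hT : ∑ v, ∑ w, a u v * a u w * a v w ≤ (G.degree u : ℝ) * ((G.degree u : ℝ) - 1) := by
    calc ∑ v, ∑ w, a u v * a u w * a v w
        ≤ ∑ v, ∑ w, a u v * (a u w - if v = w then a u w else 0) := by
          refine Finset.sum_le_sum fun v _ => Finset.sum_le_sum fun w _ => ?_
          rw [mul_assoc]
          refine mul_le_mul_of_nonneg_left ?_ (ha0 u v)
          by_cases hvw : v = w
          · subst hvw
            simp [ha]
          · simp only [hvw, if_false, sub_zero]
            exact mul_le_of_le_one_right (ha0 u w) (ha1 v w)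
      _ = ∑ v, a u v * ((G.degree u : ℝ) - 1) := by
          refine Finset.sum_congr rfl fun v _ => ?_
          rw [← Finset.mul_sum, Finset.sum_sub_distrib, ← hdeg]
          simp only [Finset.sum_ite_eq, Finset.mem_univ, if_true]
          by_cases huv : G.Adj u v <;> simp [ha, huv]
      _ = _ := by rw [← Finset.sum_mul, ← hdeg]
  -- Pointwise, `a v w (1 - a u v) (1 - a u w) ≥ 0`.
  have hkey : nbrDegreeSum G u + nbrDegreeSum G u ≤
      ∑ v, (G.degree v : ℝ) + ∑ v, ∑ w, a u v * a u w * a v w := by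
    nth_rewrite 1 [hS]
    rw [hS']
    simp only [hdeg, ← Finset.sum_add_distrib]
    refine Finset.sum_le_sum fun v _ => Finset.sum_le_sum fun w _ => ?_
    nlinarith [mul_nonneg (ha0 v w)
      (mul_nonneg (sub_nonneg.2 (ha1 u v)) (sub_nonneg.2 (ha1 u w)))]
  linarith

lemma degree_le_real (G : SimpleGraph V) (v : V) :
    (G.degree v : ℝ) ≤ (Fintype.card V : ℝ) - 1 := by
  have h := G.degree_lt_card_verts v
  have h2 : (G.degree v : ℝ) + 1 ≤ Fintype.card V := by exact_mod_cast h
  linarith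

lemma nbrDegreeSum_le (G : SimpleGraph V) (u : V) :
    nbrDegreeSum G u ≤ (G.degree u : ℝ) * ((Fintype.card V : ℝ) - 1) := by
  rw [degree_eq_sum G u, Finset.sum_mul, nbrDegreeSum]
  refine Finset.sum_le_sum fun v _ => ?_
  split_ifs
  · simpa using degree_le_real G v
  · simp

/-- The product `(k - d) (k - 1 - d)` is nonnegative for integers `d ≤ k`. -/
lemma consecutive_mul_nonneg {k d : ℕ} (h : d ≤ k) :
    0 ≤ ((k : ℝ) - d) * ((k : ℝ) - 1 - d) := by
  rcases h.eq_or_lt with rfl | h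
  · simp
  · have : (d : ℝ) + 1 ≤ k := by exact_mod_cast h
    exact mul_nonneg (by linarith) (by linarith)

/-- The algebraic core, with `k = n - 1`, `e = 2 m` and `S` the degree sum over the neighbours of
a vertex of degree `d`. -/
lemma core_ineq {k d : ℕ} (hd : 1 ≤ d) (hdk : d ≤ k) {S e : ℝ} (hSk : S ≤ d * k)
    (h1 : S + d ≤ e) (h2 : 2 * S ≤ e + d * (d - 1)) :
    (k : ℝ) * ((d : ℝ) ^ 2 + S) ≤ d * (e + k * (k - 1)) := by
  have hc := consecutive_mul_nonneg hdk
  have hd' : (1 : ℝ) ≤ d := by exact_mod_cast hd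
  have hdk' : (d : ℝ) ≤ k := by exact_mod_cast hdk
  have hd0 : (0 : ℝ) ≤ d := by linarith
  have hdc := mul_nonneg hd0 hc
  rcases le_total S ((d : ℝ) ^ 2) with hS | hS
  · have e1 := mul_le_mul_of_nonneg_left h1 hd0
    have e2 := mul_nonneg (sub_nonneg.2 hdk') (sub_nonneg.2 hS)
    nlinarith
  · have e1 := mul_le_mul_of_nonneg_left h2 hd0
    -- For the least admissible `e` the defect is affine in `S`: its value at `S = d ^ 2` is `d (k - d) (k - 1 - d)` and at
    -- `S = d k` it is `d (d - 1) (k - d)`.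
    rcases le_total (k : ℝ) (2 * d) with hk | hk
    · have e2 := mul_nonneg (sub_nonneg.2 hk) (sub_nonneg.2 hS)
      nlinarith
    · have e2 := mul_nonneg (sub_nonneg.2 hk) (sub_nonneg.2 hSk)
      have e3 := mul_nonneg hd0 (mul_nonneg (sub_nonneg.2 hd') (sub_nonneg.2 hdk'))
      nlinarith

lemma degree_sq_add_le (G : SimpleGraph V) (u : V) (hu : 0 < G.degree u) :
    ((Fintype.card V : ℝ) - 1) * ((G.degree u : ℝ) ^ 2 + nbrDegreeSum G u) ≤
      G.degree u * (2 * (G.edgeFinset.card : ℝ) +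
        ((Fintype.card V : ℝ) - 1) * ((Fintype.card V : ℝ) - 1 - 1)) := by
  have hlt := G.degree_lt_card_verts u
  have hk : (((Fintype.card V - 1 : ℕ)) : ℝ) = (Fintype.card V : ℝ) - 1 := by
    rw [Nat.cast_sub (by omega)]
    simp
  have he : ∑ v, (G.degree v : ℝ) = 2 * (G.edgeFinset.card : ℝ) := by
    exact_mod_cast G.sum_degrees_eq_twice_card_edges
  rw [← hk, ← he]
  refine core_ineq hu (by omega) ?_ (nbrDegreeSum_add_degree_le G u) (two_nbrDegreeSum_le G u)
  rw [hk]
  exact nbrDegreeSum_le G u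

/-- Lemma 2.2. For a graph `G` of order `n ≥ 2` with `m` edges,
`q(G) ≤ 2m/(n-1) + n - 2`. -/
theorem stmt2 {V : Type*} [Fintype V] [DecidableEq V] (G : SimpleGraph V)
    (n m : ℕ) (hn : Fintype.card V = n) (hn2 : 2 ≤ n)
    (hm : G.edgeFinset.card = m) :
    qIndex G ≤ 2 * (m : ℝ) / ((n : ℝ) - 1) + (n : ℝ) - 2 := by
  subst hn hm
  have hk : (0 : ℝ) < (Fintype.card V : ℝ) - 1 := by
    have : (2 : ℝ) ≤ Fintype.card V := by exact_mod_cast hn2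
    linarith
  have hnonneg : 0 ≤ 2 * (G.edgeFinset.card : ℝ) / ((Fintype.card V : ℝ) - 1)
      + (Fintype.card V : ℝ) - 2 := by
    have h2 : (2 : ℝ) ≤ Fintype.card V := by exact_mod_cast hn2
    have : 0 ≤ 2 * (G.edgeFinset.card : ℝ) / ((Fintype.card V : ℝ) - 1) := by positivity
    linarith
  refine Real.sSup_le ?_ hnonneg
  rintro μ ⟨x, hx, h⟩
  rcases le_or_gt μ 0 with hμ | hμ
  · exact hμ.trans hnonneg
  obtain ⟨u, hu, hle⟩ := exists_mul_degree_le G hμ hx h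
  have hu' : (0 : ℝ) < G.degree u := by exact_mod_cast hu
  have hmain := degree_sq_add_le G u hu
  have h3 := (mul_le_mul_of_nonneg_left hle hk.le).trans hmain
  have h4 : μ * ((Fintype.card V : ℝ) - 1) ≤ 2 * (G.edgeFinset.card : ℝ) +
      ((Fintype.card V : ℝ) - 1) * ((Fintype.card V : ℝ) - 1 - 1) := by
    refine le_of_mul_le_mul_left ?_ hu'
    linarith
  have h5 := (le_div_iff₀ hk).2 h4
  rw [add_div, mul_div_cancel_left₀ _ hk.ne'] at h5
  linarith


end QGraph
end

section
/- Let δ ≥ k ≥ 3 and n ≥ F(k,δ). Then every graph G in the family A₁(n,k,δ) satisfies q(G) ≥ 2(n−δ+k−3). -/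
/-!
The Q-index is at least every Rayleigh quotient `xᵀQx / xᵀx`, and `2 xᵀQx` is the sum of
`(x i + x j)²` over ordered adjacent pairs. The test vector equals `1` on `Y ∪ Z` and a small
constant `ε > 0` on `X`. Write `s = |X| = δ-k+2` and `m = |Y ∪ Z| = n-s`. The clique on `Y ∪ Z`
alone gives the quotient `2(m-1) = 2(n-δ+k-3)`; deleting `E'` costs `4|E'| ≤ s(k-1)` in the
numerator, and this loss is offset by the `s(k-1)` edges between `X` and `Y`, each of which
contributes `(1+ε)²`. The linear term `2εs(k-1)` then beats the `O(ε²)` terms once `ε = 1/m`.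
The hypothesis `n ≥ F(k,δ)` is only needed to guarantee `n > δ+1`.
The lemmas carrying this are `le_qIndex` (Rayleigh bound), `qMatrix_quadForm`, `sum_graphA` and
`sum_edges`.
-/

open Finset Matrix

attribute [local instance] Classical.propDecidable

namespace QGraph

variable {V : Type*} [Fintype V] [DecidableEq V]

/-! ### The Rayleigh bound -/

/-- Rayleigh's principle. The set in `qIndex` is finite, so its `sSup` is a genuine maximum. -/
lemma le_qIndex (G : SimpleGraph V) (c : ℝ) (x : V → ℝ) (hx : x ≠ 0)
    (h : c * (x ⬝ᵥ x) ≤ x ⬝ᵥ (qMatrix G *ᵥ x)) : c ≤ qIndex G := by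
  have hQ : (qMatrix G).IsHermitian := by
    ext i j
    simp only [qMatrix, Matrix.conjTranspose_apply, Matrix.of_apply, star_trivial, G.adj_comm j i]
    by_cases hij : i = j
    · subst hij; rfl
    · simp [hij, Ne.symm hij]
  have hM : (c • (1 : Matrix V V ℝ) - qMatrix G).IsHermitian := by
    refine Matrix.IsHermitian.sub ?_ hQ
    simp [Matrix.IsHermitian]
  have hfin : {μ : ℝ | ∃ x : V → ℝ, x ≠ 0 ∧ qMatrix G *ᵥ x = μ • x}.Finite := by
    refine (Module.End.finite_hasEigenvalue (Matrix.toLin' (qMatrix G))).subset ?_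
    rintro μ ⟨y, hy, hyμ⟩
    exact Module.End.hasEigenvalue_of_hasEigenvector
      (x := y) ⟨Module.End.mem_eigenspace_iff.2 (by simpa using hyμ), hy⟩
  -- Otherwise all eigenvalues of `c - Q` are positive, so `c - Q` is positive definite.
  have hex : ∃ i, hM.eigenvalues i ≤ 0 := by
    by_contra! hpos
    have hPD := hM.posDef_iff_eigenvalues_pos.2 hpos
    have := hPD.dotProduct_mulVec_pos hx
    simp only [star_trivial, Matrix.sub_mulVec, Matrix.smul_mulVec, Matrix.one_mulVec,
      dotProduct_sub, dotProduct_smul, smul_eq_mul] at this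
    linarith
  obtain ⟨i, hi⟩ := hex
  have hv := hM.mulVec_eigenvectorBasis i
  have hne : (hM.eigenvectorBasis i).ofLp ≠ 0 := by
    have := hM.eigenvectorBasis.orthonormal.ne_zero i
    simpa using this
  refine le_trans (b := c - hM.eigenvalues i) (by linarith) (le_csSup hfin.bddAbove ?_)
  refine ⟨_, hne, ?_⟩
  rw [Matrix.sub_mulVec, Matrix.smul_mulVec, Matrix.one_mulVec] at hv
  rw [sub_smul, ← hv]
  abel

lemma qMatrix_quadForm (G : SimpleGraph V) (x : V → ℝ) :
    2 * (x ⬝ᵥ (qMatrix G *ᵥ x)) =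
      ∑ i, ∑ j, (if G.Adj i j then (x i + x j) ^ 2 else 0) := by
  have hdeg : ∀ i, (G.degree i : ℝ) = ∑ j, (if G.Adj i j then (1 : ℝ) else 0) := by
    intro i
    rw [Finset.sum_boole, ← SimpleGraph.card_neighborFinset_eq_degree,
      SimpleGraph.neighborFinset_eq_filter]
  have h1 : x ⬝ᵥ (qMatrix G *ᵥ x) =
      ∑ i, ∑ j, (if G.Adj i j then x i ^ 2 + x i * x j else 0) := by
    simp only [dotProduct, Matrix.mulVec, qMatrix, Matrix.of_apply]
    refine Finset.sum_congr rfl fun i _ => ?_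
    simp only [add_mul, Finset.sum_add_distrib, ite_mul, zero_mul, Finset.sum_ite_eq,
      Finset.mem_univ, if_true, hdeg, one_mul]
    rw [Finset.sum_mul, ← Finset.sum_add_distrib, Finset.mul_sum]
    refine Finset.sum_congr rfl fun j _ => ?_
    split_ifs <;> ring
  have h2 : x ⬝ᵥ (qMatrix G *ᵥ x) =
      ∑ i, ∑ j, (if G.Adj i j then x j ^ 2 + x i * x j else 0) := by
    rw [h1, Finset.sum_comm]
    refine Finset.sum_congr rfl fun i _ => Finset.sum_congr rfl fun j _ => ?_
    simp only [G.adj_comm j i]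
    split_ifs <;> ring
  rw [two_mul]
  nth_rewrite 1 [h1]
  rw [h2, ← Finset.sum_add_distrib]
  refine Finset.sum_congr rfl fun i _ => ?_
  rw [← Finset.sum_add_distrib]
  refine Finset.sum_congr rfl fun j _ => ?_
  split_ifs <;> ring

/-! ### Counting -/

lemma sum_edges (E : Finset (Sym2 V)) (hE : ∀ e ∈ E, ¬ e.IsDiag) :
    ∑ i, ∑ j, (if s(i, j) ∈ E then (1 : ℝ) else 0) = 2 * E.card := by
  obtain ⟨H, hadj⟩ : ∃ H : SimpleGraph V, ∀ i j, H.Adj i j ↔ s(i, j) ∈ E := by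
    refine ⟨SimpleGraph.fromEdgeSet (E : Set (Sym2 V)), fun i j => ?_⟩
    simp only [SimpleGraph.fromEdgeSet_adj, Finset.mem_coe]
    exact ⟨fun h => h.1, fun h => ⟨h, fun hij => hE _ h (by simpa using hij)⟩⟩
  have h : ∑ v, H.degree v = 2 * E.card := by
    rw [H.sum_degrees_eq_twice_card_edges]
    congr 2
    ext e
    induction e with
    | _ i j => rw [SimpleGraph.mem_edgeFinset, SimpleGraph.mem_edgeSet, hadj]
  have h' : (∑ v, (H.degree v : ℝ)) = 2 * E.card := by exact_mod_cast h
  rw [← h']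
  refine Finset.sum_congr rfl fun i _ => ?_
  rw [Finset.sum_boole, ← SimpleGraph.card_neighborFinset_eq_degree,
    SimpleGraph.neighborFinset_eq_filter]
  simp only [hadj]

lemma sum_indicator (n a b : ℕ) (hb : b ≤ n) (hab : a ≤ b) :
    ∑ i : Fin n, (if a ≤ (i : ℕ) ∧ (i : ℕ) < b then (1 : ℝ) else 0) = (b : ℝ) - a := by
  rw [Fin.sum_univ_eq_sum_range (fun i => if a ≤ i ∧ i < b then (1 : ℝ) else 0) n,
    Finset.sum_boole]
  have : (Finset.range n).filter (fun i => a ≤ i ∧ i < b) = Finset.Ico a b := by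
    ext i; simp only [Finset.mem_filter, Finset.mem_range, Finset.mem_Ico]; omega
  rw [this, Nat.card_Ico, Nat.cast_sub hab]

/-- The test vector: `ε` on `X` and `1` on `Y ∪ Z`. -/
noncomputable def testVec (n k δ : ℕ) (ε : ℝ) (v : Fin n) : ℝ :=
  if k - 1 ≤ (v : ℕ) ∧ (v : ℕ) < δ + 1 then ε else 1

lemma sum_testVec_pow (n k δ p : ℕ) (ε : ℝ) (hk : 3 ≤ k) (hδ : k ≤ δ) (hn : δ + 1 < n) :
    ∑ i, testVec n k δ ε i ^ p = n - (δ - k + 2) + (δ - k + 2) * ε ^ p := by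
  have h : ∀ i : Fin n, testVec n k δ ε i ^ p =
      1 + (if k - 1 ≤ (i : ℕ) ∧ (i : ℕ) < δ + 1 then (1 : ℝ) else 0) * (ε ^ p - 1) := by
    intro i
    unfold testVec
    split_ifs <;> simp
  simp only [h, Finset.sum_add_distrib, ← Finset.sum_mul]
  rw [sum_indicator n (k - 1) (δ + 1) (by omega) (by omega), Nat.cast_sub (by omega)]
  simp
  ring

/-- All ordered pairs, minus the diagonal, minus the pairs between `X` and `Z`. -/
lemma sum_graphA (n k δ : ℕ) (ε : ℝ) (hk : 3 ≤ k) (hδ : k ≤ δ) (hn : δ + 1 < n) :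
    ∑ i, ∑ j, (if (graphA n k δ).Adj i j then
        (testVec n k δ ε i + testVec n k δ ε j) ^ 2 else 0) =
      2 * (n - 2) * ∑ i, testVec n k δ ε i ^ 2 + 2 * (∑ i, testVec n k δ ε i) ^ 2
        - 2 * (1 + ε) ^ 2 * (δ - k + 2) * (n - δ - 1) := by
  set x := testVec n k δ ε with hx
  let u : Fin n → ℝ := fun i => if k - 1 ≤ (i : ℕ) ∧ (i : ℕ) < δ + 1 then 1 else 0
  let z : Fin n → ℝ := fun i => if δ + 1 ≤ (i : ℕ) ∧ (i : ℕ) < n then 1 else 0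
  have hu : ∑ i, u i = δ - k + 2 := by
    simp only [u]
    rw [sum_indicator n (k - 1) (δ + 1) (by omega) (by omega), Nat.cast_sub (by omega)]
    push_cast
    ring
  have hz : ∑ i, z i = n - δ - 1 := by
    simp only [z]
    rw [sum_indicator n (δ + 1) n le_rfl (by omega)]
    push_cast
    ring
  have hterm : ∀ i j, (if (graphA n k δ).Adj i j then (x i + x j) ^ 2 else 0) =
      x i ^ 2 + x j ^ 2 + 2 * (x i * x j) - (if i = j then 4 * x i ^ 2 else 0)
        - (1 + ε) ^ 2 * (u i * z j) - (1 + ε) ^ 2 * (z i * u j) := by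
    intro i j
    have hi := i.2
    have hj := j.2
    by_cases hij : i = j
    · subst hij
      have : u i * z i = 0 := by
        simp only [u, z]
        split_ifs with h1 h2
        · omega
        all_goals simp
      simp only [SimpleGraph.irrefl, if_false, if_true, mul_comm (z i), this]
      ring
    · have hadj : (graphA n k δ).Adj i j ↔
          ¬ ((k - 1 ≤ (i : ℕ) ∧ (i : ℕ) < δ + 1) ∧ δ + 1 ≤ (j : ℕ)) ∧
          ¬ ((k - 1 ≤ (j : ℕ) ∧ (j : ℕ) < δ + 1) ∧ δ + 1 ≤ (i : ℕ)) := by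
        simp only [graphA, SimpleGraph.fromRel_adj, ne_eq, hij, not_false_eq_true, true_and]
        omega
      simp only [hadj, hij, if_false, hx, testVec, u, z, hi, hj, and_true]
      by_cases a1 : k - 1 ≤ (i : ℕ) ∧ (i : ℕ) < δ + 1 <;>
      by_cases a2 : k - 1 ≤ (j : ℕ) ∧ (j : ℕ) < δ + 1 <;>
      by_cases a3 : δ + 1 ≤ (i : ℕ) <;>
      by_cases a4 : δ + 1 ≤ (j : ℕ) <;>
      first
        | (exfalso; omega)
        | (simp only [a1, a2, a3, a4, if_true, if_false, and_true, and_false,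
            not_true, not_false_eq_true]; ring)
  simp only [hterm, Finset.sum_sub_distrib, Finset.sum_add_distrib, ← Finset.mul_sum,
    ← Finset.sum_mul, Finset.sum_ite_eq, Finset.mem_univ, if_true, hu, hz, Finset.sum_const,
    Finset.card_univ, Fintype.card_fin, nsmul_eq_mul]
  ring

lemma lt_of_F_le (n k δ : ℕ) (hk : 3 ≤ k) (hδk : k ≤ δ) (hn : (n : ℝ) ≥ F k δ) : δ + 1 < n := by
  obtain ⟨t, rfl⟩ := Nat.exists_eq_add_of_le hδk
  have h : F k (k + t) = ((k : ℝ) ^ 2 + 2 * k - 3) * t ^ 2 + (5 * k ^ 2 + 11 * k - 8) * t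
      + (6 * k ^ 2 + 15 * k + 4) := by
    unfold F
    push_cast
    ring
  have hk' : (3 : ℝ) ≤ k := by exact_mod_cast hk
  have ht : (0 : ℝ) ≤ t := Nat.cast_nonneg t
  have h1 : 0 ≤ ((k : ℝ) ^ 2 + 2 * k - 3) * t ^ 2 :=
    mul_nonneg (by nlinarith) (sq_nonneg _)
  have h2 : 0 ≤ ((5 : ℝ) * k ^ 2 + 11 * k - 8 - 1) * t := mul_nonneg (by nlinarith) ht
  have h3 : ((k + t : ℕ) : ℝ) + 1 < n := by
    push_cast
    nlinarith
  exact_mod_cast h3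

/-! ### The bound -/

/-- Lemma 3.1. For `δ ≥ k ≥ 3` and `n ≥ F(k,δ)`, every graph in
`𝒜₁(n,k,δ)` satisfies `q(G) ≥ 2(n-δ+k-3)`. -/
theorem stmt6 (n k δ : ℕ) (hk : 3 ≤ k) (hδk : k ≤ δ) (hn : (n : ℝ) ≥ F k δ)
    (G : SimpleGraph (Fin n)) (hG : memA1 n k δ G) :
    qIndex G ≥ 2 * ((n : ℝ) - δ + k - 3) := by
  have hδn := lt_of_F_le n k δ hk hδk hn
  obtain ⟨E, ⟨hEA, hEv⟩, hcard, ⟨φ⟩⟩ := hG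
  have hk' : (3 : ℝ) ≤ k := by exact_mod_cast hk
  have hδ' : (k : ℝ) ≤ δ := by exact_mod_cast hδk
  have hn' : (δ : ℝ) + 1 < n := by exact_mod_cast hδn
  have hcard' : 4 * (E.card : ℝ) ≤ ((δ : ℝ) - k + 2) * (k - 1) := by
    have h4 : 4 * E.card ≤ (δ - k + 2) * (k - 1) := by omega
    have : ((4 * E.card : ℕ) : ℝ) ≤ (((δ - k + 2) * (k - 1) : ℕ) : ℝ) := by exact_mod_cast h4
    rw [Nat.cast_mul, Nat.cast_mul, Nat.cast_add, Nat.cast_sub hδk,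
      Nat.cast_sub (by omega : 1 ≤ k)] at this
    simpa using this
  obtain ⟨m, hm⟩ : ∃ m : ℝ, m = n - (δ - k + 2) := ⟨_, rfl⟩
  obtain ⟨s, hs⟩ : ∃ s : ℝ, s = (δ : ℝ) - k + 2 := ⟨_, rfl⟩
  have hmpos : 0 < m := by linarith
  obtain ⟨ε, hε⟩ : ∃ ε : ℝ, ε = 1 / m := ⟨_, rfl⟩
  have hεpos : 0 < ε := by rw [hε]; positivity
  have hεm : ε * m = 1 := by rw [hε]; field_simp
  set x := testVec n k δ ε with hx
  have hP : ∑ i, x i ^ 2 = m + s * ε ^ 2 := by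
    rw [hx, sum_testVec_pow n k δ 2 ε hk hδk hδn, hm, hs]
  have hS : ∑ i, x i = m + s * ε := by
    have := sum_testVec_pow n k δ 1 ε hk hδk hδn
    simp only [pow_one] at this
    rw [hx, this, hm, hs]
  have hxφ : (fun i => x (φ i)) ⬝ᵥ (fun i => x (φ i)) = m + s * ε ^ 2 := by
    rw [← hP]
    simp only [dotProduct, ← sq]
    exact Equiv.sum_comp φ.toEquiv (fun i => x i ^ 2)
  refine le_qIndex G _ (fun i => x (φ i)) ?_ ?_
  · intro h0
    rw [h0, zero_dotProduct] at hxφ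
    have : 0 ≤ s := by linarith
    have : 0 ≤ s * ε ^ 2 := by positivity
    linarith
  have hform := qMatrix_quadForm G (fun i => x (φ i))
  have htrans : ∑ i, ∑ j, (if G.Adj i j then (x (φ i) + x (φ j)) ^ 2 else 0) =
      ∑ i, ∑ j, (if ((graphA n k δ).deleteEdges (E : Set (Sym2 (Fin n)))).Adj i j then
        (x i + x j) ^ 2 else 0) := by
    symm
    rw [← Equiv.sum_comp φ.toEquiv]
    refine Finset.sum_congr rfl fun i _ => ?_
    rw [← Equiv.sum_comp φ.toEquiv]
    refine Finset.sum_congr rfl fun j _ => ?_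
    have := φ.map_adj_iff (v := i) (w := j)
    exact if_congr this rfl rfl
  have hdel : ∑ i, ∑ j, (if ((graphA n k δ).deleteEdges (E : Set (Sym2 (Fin n)))).Adj i j then
        (x i + x j) ^ 2 else 0) =
      ∑ i, ∑ j, (if (graphA n k δ).Adj i j then (x i + x j) ^ 2 else 0)
        - 4 * (2 * E.card) := by
    rw [← sum_edges E (fun e he => (graphA n k δ).not_isDiag_of_mem_edgeSet (hEA he))]
    simp only [Finset.mul_sum, ← Finset.sum_sub_distrib]
    refine Finset.sum_congr rfl fun i _ => Finset.sum_congr rfl fun j _ => ?_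
    simp only [SimpleGraph.deleteEdges_adj, Finset.mem_coe]
    by_cases he : s(i, j) ∈ E
    · have hA : (graphA n k δ).Adj i j := hEA he
      have hone : ∀ v ∈ s(i, j), x v = 1 := by
        intro v hv
        have := hEv _ he v hv
        simp only [inY, inZ] at this
        rw [hx, testVec, if_neg (by omega)]
      simp only [he, hA, hone i (by simp), hone j (by simp)]
      norm_num
    · simp [he]
  rw [htrans, hdel, sum_graphA n k δ ε hk hδk hδn, ← hx, hP, hS] at hform
  rw [hxφ]
  have hnm : (n : ℝ) = m + s := by rw [hm, hs]; ring
  have hδs : (δ : ℝ) = s + k - 2 := by rw [hs]; ring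
  rw [← hs] at hcard'
  rw [hnm, hδs] at hform ⊢
  have hs2 : 2 ≤ s := by linarith
  -- With `ε m = 1` the surplus over `s (k - 1) - 4 |E'|` is `s ε (2 (k - 1) - 2 + ε (⋯))`.
  have hsur : 0 ≤ s * (ε * (2 * ((k : ℝ) - 1) - 2 + ε * (k - 1 + 2 * s))) := by
    have : 0 ≤ ε * ((k : ℝ) - 1 + 2 * s) := mul_nonneg hεpos.le (by linarith)
    exact mul_nonneg (by linarith) (mul_nonneg hεpos.le (by linarith))
  linear_combination hcard' + hsur - hform / 2 + 2 * s * ε * hεm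

end QGraph
end

section
/- Let δ ≥ k ≥ 3 and n ≥ F(k,δ). Then every connected graph G in the family A₂(n,k,δ) satisfies q(G) < 2(n−δ+k−3). -/
/-!
The bound comes from a Collatz–Wielandt test vector: if `x > 0` and `Q(G) x < ρ x` entrywise, then
every eigenvalue of `Q(G)` is smaller than `ρ` (`qIndex_lt_of_pos_vector`).

Write `s = |X| = δ - k + 2`, `t = |Y| = k - 1`, `N = |Y ∪ Z| = n - s`, `e = |E'|` and let `D v` be
the number of edges of `E'` at `v`, so `ρ = 2 (N - 1)`. As `ρ` is the `Q`-index of `K_N`, the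
test vector is a perturbation of the indicator of `Y ∪ Z`: it is `t / N` on `X` and
`1 - (2 - 4 e / N) D v / N + [v ∈ Y] (s + τ) / N` on `Y ∪ Z`, with `τ = s (s + t + 1) / N`.
For `v ∈ Y ∪ Z` the required inequality then reduces to `∑_{Y ∪ Z} x < N`, that is, to
`t (s + τ) < 2 e (2 - 4 e / N)`. Since `e = ⌊st / 4⌋ + 1` gives `4 e ≥ st + 1`, this follows from
`8 e² + s t (s + t + 1) < N`, and in terms of `s` and `t` the hypothesis `n ≥ F(k, δ)` reads
`n ≥ t² s² + 4 t s² + t² s + 5 t s + 8 s + t + 9`, which is more than enough.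
-/


open Finset Matrix

attribute [local instance] Classical.propDecidable

namespace QGraph

variable {V : Type*} [Fintype V] [DecidableEq V]

/-- A Collatz–Wielandt bound: a positive vector `x` with `Q(G) x < ρ x` entrywise forces
`q(G) < ρ`. The entry `(Q(G) x) v` is written as the sum of `x v + x u` over neighbours `u`. -/
theorem qIndex_lt_of_pos_vector (G : SimpleGraph V) (ρ : ℝ) (hρ : 0 < ρ) (x : V → ℝ)
    (hx : ∀ v, 0 < x v)
    (h : ∀ v, ∑ u, (if G.Adj v u then x v + x u else 0) < ρ * x v) :
    qIndex G < ρ := by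
  -- Finiteness of `V` turns the strict inequalities into a uniform constant `c < ρ`.
  obtain ⟨c, hc0, hcρ, hc⟩ : ∃ c, 0 ≤ c ∧ c < ρ ∧
      ∀ v, ∑ u, (if G.Adj v u then x v + x u else 0) ≤ c * x v := by
    rcases isEmpty_or_nonempty V with hV | hV
    · exact ⟨0, le_rfl, hρ, fun v => isEmptyElim v⟩
    · obtain ⟨w, hw⟩ := Finite.exists_max
        (fun v => (∑ u, (if G.Adj v u then x v + x u else 0)) / x v)
      refine ⟨_, ?_, (div_lt_iff₀ (hx w)).2 (h w), fun v => (div_le_iff₀ (hx v)).1 (hw v)⟩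
      refine div_nonneg (Finset.sum_nonneg fun u _ => ?_) (hx w).le
      split_ifs
      · exact (add_pos (hx w) (hx u)).le
      · exact le_rfl
  refine lt_of_le_of_lt (Real.sSup_le ?_ hc0) hcρ
  rintro μ ⟨z, hz, hzμ⟩
  obtain ⟨i, hi⟩ := Function.ne_iff.1 hz
  have : Nonempty V := ⟨i⟩
  obtain ⟨w, hw⟩ := Finite.exists_max (fun v => |z v| / x v)
  set r := |z w| / x w with hr
  have hrpos : 0 < r := lt_of_lt_of_le (div_pos (abs_pos.2 hi) (hx i)) (hw i)
  have hzr : ∀ v, |z v| ≤ r * x v := fun v => (div_le_iff₀ (hx v)).1 (hw v)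
  have hzw : |z w| = r * x w := by rw [hr, div_mul_cancel₀ _ (hx w).ne']
  have hrow : μ * z w = ∑ u, (if G.Adj w u then z w + z u else 0) := by
    have h1 := congrFun hzμ w
    simp only [Matrix.mulVec, dotProduct, qMatrix, Matrix.of_apply, Pi.smul_apply,
      smul_eq_mul] at h1
    rw [← h1]
    have h2 : (G.degree w : ℝ) * z w = ∑ u, (if G.Adj w u then z w else 0) := by
      rw [← Finset.sum_filter, Finset.sum_const, nsmul_eq_mul,
        ← SimpleGraph.card_neighborFinset_eq_degree, SimpleGraph.neighborFinset_eq_filter]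
    have h3 : ∑ u, (if w = u then (G.degree w : ℝ) else 0) * z u = (G.degree w : ℝ) * z w := by
      simp
    simp only [add_mul]
    rw [Finset.sum_add_distrib, h3, h2, ← Finset.sum_add_distrib]
    refine Finset.sum_congr rfl fun u _ => ?_
    split_ifs <;> simp
  have hb : |μ * z w| ≤ r * (c * x w) := by
    rw [hrow]
    calc |∑ u, (if G.Adj w u then z w + z u else 0)|
        ≤ ∑ u, |if G.Adj w u then z w + z u else 0| := Finset.abs_sum_le_sum_abs _ _
      _ ≤ ∑ u, r * (if G.Adj w u then x w + x u else 0) := by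
          refine Finset.sum_le_sum fun u _ => ?_
          split_ifs
          · have := abs_add_le (z w) (z u)
            have := hzr w
            have := hzr u
            linarith
          · simp
      _ = r * ∑ u, (if G.Adj w u then x w + x u else 0) := by rw [Finset.mul_sum]
      _ ≤ r * (c * x w) := mul_le_mul_of_nonneg_left (hc w) hrpos.le
  rw [abs_mul, hzw] at hb
  have hp : 0 < r * x w := mul_pos hrpos (hx w)
  have : |μ| ≤ c := by
    by_contra hcon
    have := mul_lt_mul_of_pos_right (not_le.1 hcon) hp
    linarith
  exact (le_abs_self μ).trans this

/-- The inequalities between the parameters of the test vector: `s = |X|`, `t = |Y|`,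
`e = |E'|`, `N = |Y ∪ Z|` and `c = 1 / N`. -/
theorem test_vector_bounds (s t e N c : ℝ) (hs : 2 ≤ s) (ht : 2 ≤ t) (he1 : s * t + 1 ≤ 4 * e)
    (he2 : 4 * e ≤ s * t + 4)
    (hN : t ^ 2 * s ^ 2 + 4 * t * s ^ 2 + t ^ 2 * s + 5 * t * s + 7 * s + t + 9 ≤ N)
    (hc : c * N = 1) :
    0 < c ∧ 2 * e * c < 1 ∧ s * (s + t + 1) * c ≤ 1 ∧ (3 * s + t + 1) * c < 1 ∧
      t * (s + s * (s + t + 1) * c) < 2 * e * (2 - 4 * e * c) := by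
  have hst : 4 ≤ s * t := by nlinarith
  have hs2t : 0 ≤ t * s ^ 2 := by positivity
  have ht2s : 0 ≤ t ^ 2 * s := by positivity
  have hst2 : 0 ≤ t ^ 2 * s ^ 2 := by positivity
  have hNpos : 0 < N := by nlinarith
  have hc0 : 0 < c := by
    by_contra h
    nlinarith
  have key : ∀ a : ℝ, a < N → a * c < 1 := fun a ha => by
    rw [← hc, mul_comm c]; exact mul_lt_mul_of_pos_right ha hc0
  refine ⟨hc0, key _ (by nlinarith), (key _ ?_).le, key _ (by nlinarith), ?_⟩
  · nlinarith [mul_nonneg (by linarith : (0:ℝ) ≤ t - 2) (sq_nonneg s)]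
  · have he : 8 * e ^ 2 ≤ (s * t + 4) ^ 2 / 2 := by nlinarith
    have := key (t * s * (s + t + 1) + 8 * e ^ 2) (by nlinarith)
    nlinarith

/-- Existence of the test vector, for an arbitrary vertex set. The graph `H` is obtained from
`K_Y ∨ (K_X ∪ K_Z)`, where `Z` is the complement of `X ∪ Y`, by deleting the edges of a graph `B`
that avoids `X`. -/
theorem exists_test_vector (H B : SimpleGraph V) (X Y : Finset V) (hXY : Disjoint X Y)
    (hH : ∀ v u, H.Adj v u ↔ (v ≠ u ∧ (v ∈ Y ∨ u ∈ Y ∨ (v ∈ X ↔ u ∈ X))) ∧ ¬ B.Adj v u)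
    (hB : ∀ v u, B.Adj v u → v ∉ X ∧ (v ≠ u ∧ (v ∈ Y ∨ u ∈ Y ∨ (v ∈ X ↔ u ∈ X))))
    (s t e N : ℝ) (hXs : (X.card : ℝ) = s) (hYt : (Y.card : ℝ) = t)
    (hVN : (Fintype.card V : ℝ) = N + s) (hBe : (B.edgeFinset.card : ℝ) = e)
    (hs : 2 ≤ s) (ht : 2 ≤ t) (he1 : s * t + 1 ≤ 4 * e) (he2 : 4 * e ≤ s * t + 4)
    (hN : t ^ 2 * s ^ 2 + 4 * t * s ^ 2 + t ^ 2 * s + 5 * t * s + 7 * s + t + 9 ≤ N) :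
    ∃ x : V → ℝ, (∀ v, 0 < x v) ∧
      ∀ v, ∑ u, (if H.Adj v u then x v + x u else 0) < 2 * (N - 1) * x v := by
  have hst : 4 ≤ s * t := by nlinarith
  have hNpos : 0 < N := by
    have : 0 ≤ t * s ^ 2 := by positivity
    have : 0 ≤ t ^ 2 * s := by positivity
    have : 0 ≤ t ^ 2 * s ^ 2 := by positivity
    nlinarith
  obtain ⟨c, hcN⟩ : ∃ c, c * N = 1 := ⟨N⁻¹, inv_mul_cancel₀ hNpos.ne'⟩
  obtain ⟨hc0, hb1, hb2, hb3, hb4⟩ := test_vector_bounds s t e N c hs ht he1 he2 hN hcN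
  set τ := s * (s + t + 1) * c with hτ
  have hτ0 : 0 ≤ τ := by positivity
  set D : V → ℝ := fun v => (B.degree v : ℝ) with hD
  have hD0 : ∀ v, 0 ≤ D v := fun v => Nat.cast_nonneg _
  have hDe : ∀ v, D v ≤ e := fun v => by
    rw [← hBe, hD]
    simp only [Nat.cast_le]
    rw [← SimpleGraph.card_incidenceFinset_eq_degree]
    exact Finset.card_le_card (B.incidenceFinset_subset v)
  have hDsum : ∑ v, D v = 2 * e := by
    have := B.sum_degrees_eq_twice_card_edges
    rw [← hBe]
    simp only [hD]
    exact_mod_cast this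
  have hDX : ∀ v ∈ X, D v = 0 := fun v hv => by
    simp only [hD, Nat.cast_eq_zero]
    by_contra h0
    obtain ⟨u, hu⟩ := (B.degree_pos_iff_exists_adj v).1 (Nat.pos_of_ne_zero h0)
    exact (hB v u hu).1 hv
  have hDrow : ∀ v, D v = ∑ u, (if B.Adj v u then (1 : ℝ) else 0) := fun v => by
    rw [← Finset.sum_filter, Finset.sum_const, nsmul_eq_mul, mul_one, hD]
    simp only
    rw [← SimpleGraph.card_neighborFinset_eq_degree, SimpleGraph.neighborFinset_eq_filter]
  -- `g` is the value of `2 - 4 e / N`, the minimal contribution of a deleted edge at a vertex.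
  set g := 2 - 4 * e * c with hg
  have hg0 : 0 < g := by linarith
  set x : V → ℝ := fun v => if v ∈ X then t * c else
    1 - g * D v * c + (if v ∈ Y then (s + τ) * c else 0) with hx
  have hxX : ∀ v ∈ X, x v = t * c := fun v hv => by simp [hx, hv]
  have hxY : ∀ v ∈ Y, x v = 1 - g * D v * c + (s + τ) * c := fun v hv => by
    have : v ∉ X := fun h => Finset.disjoint_left.1 hXY h hv
    simp [hx, hv, this]
  have hxZ : ∀ v, v ∉ X → v ∉ Y → x v = 1 - g * D v * c := fun v h1 h2 => by
    simp [hx, h1, h2]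
  have hxlow : ∀ v, v ∉ X → g / 2 ≤ x v := fun v hv => by
    have h1 : g * D v * c ≤ 2 * e * c := by
      have : g * D v ≤ 2 * e := by
        have : g ≤ 2 := by
          have : 0 ≤ e * c := mul_nonneg (by linarith) hc0.le
          linarith
        nlinarith [hD0 v, hDe v]
      exact mul_le_mul_of_nonneg_right this hc0.le
    have h2 : 0 ≤ (s + τ) * c := by positivity
    by_cases hY : v ∈ Y
    · rw [hxY v hY]; linarith
    · rw [hxZ v hv hY]; linarith
  have hxpos : ∀ v, 0 < x v := fun v => by
    by_cases hv : v ∈ X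
    · rw [hxX v hv]; positivity
    · linarith [hxlow v hv]
  have hxYup : ∀ v ∈ Y, x v ≤ 1 + (s + 1) * c := fun v hv => by
    rw [hxY v hv]
    have : 0 ≤ g * D v * c := mul_nonneg (mul_nonneg hg0.le (hD0 v)) hc0.le
    have : (s + τ) * c ≤ (s + 1) * c := mul_le_mul_of_nonneg_right (by linarith) hc0.le
    linarith
  set S := ∑ u, (if u ∈ X then 0 else x u) with hS
  set T := ∑ u, (if u ∈ Y then x u else 0) with hT
  have hcardX : ∑ u : V, (if u ∈ X then (1 : ℝ) else 0) = s := by simp [hXs]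
  have hcardY : ∑ u : V, (if u ∈ Y then (1 : ℝ) else 0) = t := by simp [hYt]
  have hcardV : ∑ _u : V, (1 : ℝ) = N + s := by simp [hVN]
  have hSval : S = N - g * (2 * e) * c + t * ((s + τ) * c) := by
    have : ∀ u, (if u ∈ X then 0 else x u) =
        1 - (if u ∈ X then (1 : ℝ) else 0) - (g * c) * D u
          + (if u ∈ Y then (1 : ℝ) else 0) * ((s + τ) * c) := fun u => by
      by_cases hX : u ∈ X
      · have hY : u ∉ Y := Finset.disjoint_left.1 hXY hX
        simp [hX, hY, hDX u hX]
      · by_cases hY : u ∈ Y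
        · rw [hxY u hY]; simp [hX, hY]; ring
        · rw [hxZ u hX hY]; simp [hX, hY]; ring
    rw [hS, Finset.sum_congr rfl fun u _ => this u]
    rw [Finset.sum_add_distrib, Finset.sum_sub_distrib, Finset.sum_sub_distrib, ← Finset.mul_sum,
      ← Finset.sum_mul, hcardX, hcardY, hcardV, hDsum]
    ring
  have hSN : S < N := by
    have := mul_lt_mul_of_pos_right hb4 hc0
    rw [hSval]; linarith
  have hTup : T ≤ t * (1 + (s + 1) * c) := by
    rw [← hcardY, Finset.sum_mul, hT]
    refine Finset.sum_le_sum fun u _ => ?_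
    split_ifs with hu
    · linarith [hxYup u hu]
    · simp
  -- Row sums of `H` are those of the undeleted graph minus those of `B`.
  have hsplit : ∀ v, ∑ u, (if H.Adj v u then x v + x u else 0) =
      ∑ u, (if v ∈ Y ∨ u ∈ Y ∨ (v ∈ X ↔ u ∈ X) then x v + x u else 0) - 2 * x v
        - ∑ u, (if B.Adj v u then x v + x u else 0) := fun v => by
    have h1 : 2 * x v = ∑ u, (if v = u then 2 * x u else 0) := by simp
    rw [h1, ← Finset.sum_sub_distrib, ← Finset.sum_sub_distrib]
    refine Finset.sum_congr rfl fun u _ => ?_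
    have hBvu := hB v u
    by_cases hvu : v = u
    · subst hvu
      simp [two_mul]
    · by_cases hb : B.Adj v u
      · have := (hBvu hb).2.2
        simp [hH, hb, hvu, this]
      · simp [hH, hb, hvu]
  have hBlow : ∀ v, D v * g ≤ ∑ u, (if B.Adj v u then x v + x u else 0) := fun v => by
    rw [hDrow, Finset.sum_mul]
    refine Finset.sum_le_sum fun u _ => ?_
    split_ifs with hb
    · have h1 := hxlow v (hB v u hb).1
      have h2 := hxlow u (hB u v hb.symm).1
      linarith
    · simp
  refine ⟨x, hxpos, fun v => ?_⟩
  rw [hsplit]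
  have hBv := hBlow v
  by_cases hX : v ∈ X
  · have hY : v ∉ Y := Finset.disjoint_left.1 hXY hX
    have hrow : ∑ u, (if v ∈ Y ∨ u ∈ Y ∨ (v ∈ X ↔ u ∈ X) then x v + x u else 0) =
        (s + t) * x v + T + s * (t * c) := by
      have : ∀ u, (if v ∈ Y ∨ u ∈ Y ∨ (v ∈ X ↔ u ∈ X) then x v + x u else 0) =
          (if u ∈ X then (1 : ℝ) else 0) * (x v + t * c) + (if u ∈ Y then (1 : ℝ) else 0) * x v
            + (if u ∈ Y then x u else 0) := fun u => by
        by_cases hX' : u ∈ X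
        · have hY' : u ∉ Y := Finset.disjoint_left.1 hXY hX'
          simp [hX, hX', hY', hxX u hX']
        · by_cases hY' : u ∈ Y <;> simp [hX, hX', hY', hY]
      rw [Finset.sum_congr rfl fun u _ => this u, Finset.sum_add_distrib, Finset.sum_add_distrib,
        ← Finset.sum_mul, ← Finset.sum_mul, hcardX, hcardY]
      ring
    rw [hDX v hX] at hBv
    rw [hrow]
    generalize (∑ u, if B.Adj v u then x v + x u else 0) = b at hBv ⊢
    rw [hxX v hX]
    have h1 : t * ((3 * s + t + 1) * c) < t * 1 := mul_lt_mul_of_pos_left hb3 (by linarith)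
    have h2 : 2 * (N - 1) * (t * c) = 2 * t - 2 * (t * c) := by linear_combination 2 * t * hcN
    rw [h2]
    linarith
  · by_cases hY : v ∈ Y
    · have hrow : ∑ u, (if v ∈ Y ∨ u ∈ Y ∨ (v ∈ X ↔ u ∈ X) then x v + x u else 0) =
          (N + s) * x v + S + s * (t * c) := by
        have : ∀ u, (if v ∈ Y ∨ u ∈ Y ∨ (v ∈ X ↔ u ∈ X) then x v + x u else 0) =
            1 * x v + (if u ∈ X then 0 else x u) + (if u ∈ X then (1 : ℝ) else 0) * (t * c) :=
          fun u => by
            by_cases hX' : u ∈ X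
            · simp [hY, hX', hxX u hX']
            · simp [hY, hX']
        rw [Finset.sum_congr rfl fun u _ => this u, Finset.sum_add_distrib,
          Finset.sum_add_distrib, ← Finset.sum_mul, ← Finset.sum_mul, hcardX, hcardV]
      rw [hrow]
      have h1 : N * x v = N - D v * g + s + τ := by
        rw [hxY v hY]; linear_combination (- g * D v + s + τ) * hcN
      have h2 : s * x v ≤ s * (1 + (s + 1) * c) :=
        mul_le_mul_of_nonneg_left (hxYup v hY) (by linarith)
      linarith
    · have hrow : ∑ u, (if v ∈ Y ∨ u ∈ Y ∨ (v ∈ X ↔ u ∈ X) then x v + x u else 0) =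
          N * x v + S := by
        have : ∀ u, (if v ∈ Y ∨ u ∈ Y ∨ (v ∈ X ↔ u ∈ X) then x v + x u else 0) =
            1 * x v - (if u ∈ X then (1 : ℝ) else 0) * x v + (if u ∈ X then 0 else x u) :=
          fun u => by
            by_cases hX' : u ∈ X
            · have hY' : u ∉ Y := Finset.disjoint_left.1 hXY hX'
              simp [hY, hX, hX', hY']
            · simp [hX, hX']
        rw [Finset.sum_congr rfl fun u _ => this u, Finset.sum_add_distrib,
          Finset.sum_sub_distrib, ← Finset.sum_mul, ← Finset.sum_mul, hcardX, hcardV]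
        ring
      rw [hrow]
      have h1 : N * x v = N - D v * g := by
        rw [hxZ v hX hY]; linear_combination (- g * D v) * hcN
      linarith

/-- Lemma 3.8. For `δ ≥ k ≥ 3` and `n ≥ F(k,δ)`, every connected graph
in `𝒜₂(n,k,δ)` satisfies `q(G) < 2(n-δ+k-3)`. -/
theorem stmt8 (n k δ : ℕ) (hk : 3 ≤ k) (hδk : k ≤ δ) (hn : (n : ℝ) ≥ F k δ)
    (G : SimpleGraph (Fin n)) (hG : memA2 n k δ G) (hconn : G.Connected) :
    qIndex G < 2 * ((n : ℝ) - δ + k - 3) := by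
  obtain ⟨E', ⟨⟨hE1, hE2⟩, hcard⟩, ⟨φ⟩⟩ := hG
  -- In terms of `t = |Y|` and `s = |X|` one has `k = t + 1` and `δ = s + t - 1`.
  obtain ⟨t, rfl⟩ : ∃ t, k = t + 1 := ⟨k - 1, by omega⟩
  obtain ⟨s, hs⟩ : ∃ s, δ + 1 = s + t := ⟨δ + 1 - t, by omega⟩
  have hs2 : 2 ≤ s := by omega
  have ht2 : 2 ≤ t := by omega
  have hs2' : (2 : ℝ) ≤ s := by exact_mod_cast hs2
  have ht2' : (2 : ℝ) ≤ t := by exact_mod_cast ht2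
  have hδ : (δ : ℝ) = s + t - 1 := by
    have : ((δ + 1 : ℕ) : ℝ) = ((s + t : ℕ) : ℝ) := by rw [hs]
    push_cast at this
    linarith
  have hF : F (t + 1) δ = (t : ℝ) ^ 2 * s ^ 2 + 4 * t * s ^ 2 + t ^ 2 * s + 5 * t * s + 8 * s
      + t + 9 := by
    simp only [F, hδ]
    push_cast
    ring
  rw [hF] at hn
  have hpos : (0 : ℝ) ≤ (t : ℝ) ^ 2 * s ^ 2 + 4 * t * s ^ 2 + t ^ 2 * s + 5 * t * s := by
    positivity
  have hnst : s + t ≤ n := by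
    have : ((s + t : ℕ) : ℝ) ≤ n := by push_cast; linarith
    exact_mod_cast this
  rw [show δ - (t + 1) + 2 = s by omega, Nat.add_sub_cancel] at hcard
  set X : Finset (Fin n) := Finset.univ.filter fun v => t ≤ (v : ℕ) ∧ (v : ℕ) < s + t with hX
  set Y : Finset (Fin n) := Finset.univ.filter fun v => (v : ℕ) < t with hY
  have hXc : X.card = s := by
    have : X.map Fin.valEmbedding = Finset.Ico t (s + t) := by
      ext a
      simp only [hX, Finset.mem_map, Finset.mem_filter, Finset.mem_univ, true_and,
        Fin.valEmbedding_apply, Finset.mem_Ico]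
      exact ⟨by rintro ⟨v, hv, rfl⟩; exact hv, fun h => ⟨⟨a, by omega⟩, h, rfl⟩⟩
    rw [← Finset.card_map Fin.valEmbedding, this]
    simp
  have hYc : Y.card = t := by
    have : Y.map Fin.valEmbedding = Finset.range t := by
      ext a
      simp only [hY, Finset.mem_map, Finset.mem_filter, Finset.mem_univ, true_and,
        Fin.valEmbedding_apply, Finset.mem_range]
      exact ⟨by rintro ⟨v, hv, rfl⟩; exact hv, fun h => ⟨⟨a, by omega⟩, h, rfl⟩⟩
    rw [← Finset.card_map Fin.valEmbedding, this]
    simp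
  have hXY : Disjoint X Y := by
    rw [Finset.disjoint_left]
    intro v h1 h2
    simp only [hX, hY, Finset.mem_filter] at h1 h2
    omega
  have hA : ∀ v u, (graphA n (t + 1) δ).Adj v u ↔
      (v ≠ u ∧ (v ∈ Y ∨ u ∈ Y ∨ (v ∈ X ↔ u ∈ X))) := by
    intro v u
    simp only [graphA, SimpleGraph.fromRel_adj, hX, hY, Finset.mem_filter, Finset.mem_univ,
      true_and, Nat.add_sub_cancel, hs]
    refine and_congr_right fun _ => ?_
    omega
  set B : SimpleGraph (Fin n) := SimpleGraph.fromEdgeSet (↑E' : Set (Sym2 (Fin n))) with hBdef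
  have hBadj : ∀ v u, B.Adj v u ↔ s(v, u) ∈ E' := by
    intro v u
    rw [hBdef, SimpleGraph.fromEdgeSet_adj, Finset.mem_coe]
    refine ⟨fun h => h.1, fun h => ⟨h, ?_⟩⟩
    have : (graphA n (t + 1) δ).Adj v u := hE1 h
    exact this.ne
  have hBE : B.edgeFinset = E' := by
    ext e
    induction e using Sym2.ind with
    | _ v u => rw [SimpleGraph.mem_edgeFinset, SimpleGraph.mem_edgeSet, hBadj]
  have hB : ∀ v u, B.Adj v u → v ∉ X ∧ (v ≠ u ∧ (v ∈ Y ∨ u ∈ Y ∨ (v ∈ X ↔ u ∈ X))) := by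
    intro v u h
    rw [hBadj] at h
    refine ⟨?_, (hA v u).1 (hE1 h)⟩
    have := hE2 _ h v (Sym2.mem_mk_left v u)
    simp only [inY, inZ, Nat.add_sub_cancel, hs] at this
    simp only [hX, Finset.mem_filter, Finset.mem_univ, true_and]
    omega
  have hH : ∀ v u, ((graphA n (t + 1) δ).deleteEdges (↑E' : Set (Sym2 (Fin n)))).Adj v u ↔
      (v ≠ u ∧ (v ∈ Y ∨ u ∈ Y ∨ (v ∈ X ↔ u ∈ X))) ∧ ¬ B.Adj v u := by
    intro v u
    rw [SimpleGraph.deleteEdges_adj, hA, hBadj, Finset.mem_coe]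
  have he1 : (s : ℝ) * t + 1 ≤ 4 * (E'.card : ℝ) := by
    have : s * t + 1 ≤ 4 * E'.card := by omega
    exact_mod_cast this
  have he2 : 4 * (E'.card : ℝ) ≤ (s : ℝ) * t + 4 := by
    have : 4 * E'.card ≤ s * t + 4 := by omega
    exact_mod_cast this
  obtain ⟨x, hx, hrow⟩ := exists_test_vector
    ((graphA n (t + 1) δ).deleteEdges (↑E' : Set (Sym2 (Fin n)))) B X Y hXY hH hB
    s t E'.card (n - s) (by rw [hXc]) (by rw [hYc]) (by simp) (by rw [← hBE]; congr!)
    hs2' ht2' he1 he2 (by linarith)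
  have hρ : 2 * ((n : ℝ) - δ + (t + 1 : ℕ) - 3) = 2 * ((n : ℝ) - s - 1) := by
    rw [hδ]; push_cast; ring
  rw [hρ]
  -- The test vector is transported to `G` along the isomorphism.
  refine qIndex_lt_of_pos_vector G _ (by linarith) (fun v => x (φ v)) (fun v => hx _) fun v => ?_
  refine lt_of_eq_of_lt ?_ (hrow (φ v))
  refine Fintype.sum_equiv φ.toEquiv _ _ fun u => ?_
  have : ((graphA n (t + 1) δ).deleteEdges (↑E' : Set (Sym2 (Fin n)))).Adj (φ v) (φ u) ↔
    G.Adj v u := φ.map_rel_iff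
  by_cases hvu : G.Adj v u
  · exact (if_pos hvu).trans (if_pos (this.2 hvu)).symm
  · exact (if_neg hvu).trans (if_neg (mt this.1 hvu)).symm

end QGraph
end

section
/- Let δ ≥ k ≥ 3 and n ≥ F(k,δ). Let G be a connected graph in A₂(n,k,δ) with q(G) > n−δ+k−3 and let x be the positive eigenvector of Q(G) corresponding to q(G). If Z₂ ≠ ∅, then x_i > x_j for all i ∈ Z₁ and all j ∈ Z₂. -/
/-!
Write `D = n - δ + k - 3` and let `W = Y ∪ Z`, a set of `D + 1` vertices. A vertex of `Z` has all its
neighbours in `W`, so a vertex `i ∈ Z` of full degree `D` has closed neighbourhood exactly `W`, while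
the closed neighbourhood of any `j ∈ Z` lies in `W`. The eigenvalue equation at `v` says that
`(q - d(v) + 1) x_v` is the sum of `x` over the closed neighbourhood of `v` (`eigen_closed_nbhd`).
By positivity of `x`, `(q - d(j) + 1) x_j ≤ (q - d(i) + 1) x_i`; as `d(j) < d(i) < q`, this forces
`x_j < x_i`.
-/

open Finset Matrix

attribute [local instance] Classical.propDecidable

namespace QGraph

variable {V : Type*} [Fintype V] [DecidableEq V]

/-- The eigenvalue equation of `Q(G)` at `v`, in terms of the closed neighbourhood of `v`. -/
theorem eigen_closed_nbhd (G : SimpleGraph V) (x : V → ℝ) (q : ℝ)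
    (h : qMatrix G *ᵥ x = q • x) (v : V) :
    (q - G.degree v + 1) * x v = ∑ w ∈ insert v (G.neighborFinset v), x w := by
  have hv := congrFun h v
  have hs : (qMatrix G *ᵥ x) v = G.degree v * x v + ∑ w ∈ G.neighborFinset v, x w := by
    simp only [Matrix.mulVec, dotProduct, qMatrix, Matrix.of_apply, add_mul,
      Finset.sum_add_distrib, ite_mul, zero_mul, one_mul]
    congr 1
    · simp
    · rw [← Finset.sum_filter]
      refine Finset.sum_congr ?_ fun _ _ => rfl
      ext w
      simp
  rw [hs, Pi.smul_apply, smul_eq_mul] at hv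
  rw [Finset.sum_insert (by simp)]
  linarith

/-- In a subgraph of `A(n,k,δ)`, the closed neighbourhood of a vertex of `Z` avoids `X`,
which is encoded as the interval `[k-1, δ+1)` of `Fin n`. -/
theorem closed_nbhd_subset {n k δ : ℕ} {G : SimpleGraph (Fin n)}
    (hG : G ≤ graphA n k δ) {v : Fin n} (hv : inZ n δ v) (a b : Fin n)
    (ha : (a : ℕ) = k - 1) (hb : (b : ℕ) = δ + 1) :
    insert v (G.neighborFinset v) ⊆ (Finset.Ico a b)ᶜ := by
  intro w hw
  unfold inZ at hv
  rw [Finset.mem_compl, Finset.mem_Ico, Fin.le_def, Fin.lt_def, ha, hb]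
  rw [Finset.mem_insert, SimpleGraph.mem_neighborFinset] at hw
  rcases hw with rfl | hw
  · omega
  · have h := hG hw
    simp only [graphA, SimpleGraph.fromRel_adj] at h
    omega

/-- Lemma 3.6(1). Let `G` be a connected member of `𝒜₂(n,k,δ)` with
`q(G) > n-δ+k-3`, and `x` the positive eigenvector of `Q(G)`. If `Z₂ ≠ ∅` then
`x_i > x_j` for all `i ∈ Z₁` and `j ∈ Z₂`. -/
theorem stmt11 (n k δ : ℕ) (hk : 3 ≤ k) (hδk : k ≤ δ) (hn : (n : ℝ) ≥ F k δ)
    (E' : Finset (Sym2 (Fin n))) (hE : A2Conds n k δ E')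
    (G : SimpleGraph (Fin n))
    (hG : G = (graphA n k δ).deleteEdges (↑E' : Set (Sym2 (Fin n))))
    (hconn : G.Connected)
    (hq : qIndex G > (n : ℝ) - δ + k - 3)
    (x : Fin n → ℝ) (hx : ∀ v, 0 < x v)
    (heig : qMatrix G *ᵥ x = qIndex G • x)
    (hZ2 : ∃ v, inZ n δ v ∧ G.degree v ≤ n - δ + k - 4)
    (i j : Fin n)
    (hi : inZ n δ i ∧ G.degree i = n - δ + k - 3)
    (hj : inZ n δ j ∧ G.degree j ≤ n - δ + k - 4) :
    x i > x j := by
  have hle : G ≤ graphA n k δ := hG ▸ SimpleGraph.deleteEdges_le _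
  obtain ⟨hiZ, hid⟩ := hi
  obtain ⟨hjZ, hjd⟩ := hj
  have hin : δ + 1 ≤ (i : ℕ) := hiZ
  have hilt := i.isLt
  let a : Fin n := ⟨k - 1, by omega⟩
  let b : Fin n := ⟨δ + 1, by omega⟩
  have hsi := closed_nbhd_subset hle hiZ a b rfl rfl
  have hsj := closed_nbhd_subset hle hjZ a b rfl rfl
  -- The closed neighbourhood of `i` has as many elements as `Y ∪ Z`, so the two coincide.
  have hWi : insert i (G.neighborFinset i) = (Finset.Ico a b)ᶜ := by
    refine Finset.eq_of_subset_of_card_le hsi ?_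
    rw [Finset.card_compl, Fin.card_Ico, Fintype.card_fin, Finset.card_insert_of_notMem (by simp),
      SimpleGraph.card_neighborFinset_eq_degree, hid]
    simp only [a, b]
    omega
  have hsum : ∑ w ∈ insert j (G.neighborFinset j), x w ≤
      ∑ w ∈ insert i (G.neighborFinset i), x w := by
    rw [hWi]
    exact Finset.sum_le_sum_of_subset_of_nonneg hsj fun w _ _ => (hx w).le
  rw [← eigen_closed_nbhd G x _ heig, ← eigen_closed_nbhd G x _ heig] at hsum
  have hdi : (G.degree i : ℝ) = (n : ℝ) - δ + k - 3 := by
    have h : G.degree i + δ + 3 = n + k := by omega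
    have h' : (G.degree i : ℝ) + δ + 3 = n + k := by exact_mod_cast h
    linarith
  have hdj : (G.degree j : ℝ) + 1 ≤ G.degree i := by
    have h : G.degree j + 1 ≤ G.degree i := by omega
    exact_mod_cast h
  by_contra! hcon
  nlinarith [hx i, hx j, mul_le_mul_of_nonneg_left hcon
    (show (0 : ℝ) ≤ qIndex G - G.degree i + 1 by linarith),
    mul_le_mul_of_nonneg_right hdj (hx j).le]

end QGraph
end

section
/- Let δ ≥ k ≥ 3 and n ≥ F(k,δ). Let G be a connected graph in A₂(n,k,δ) with q(G) > n−1 and let x be the positive eigenvector of Q(G) corresponding to q(G). If Y₁ ≠ ∅ and Y₂ ≠ ∅, then x_i > x_j for all i ∈ Y₁ and all j ∈ Y₂. -/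
/-!
Write `q` for the `Q`-index, `S` for the sum of all coordinates of `x`, and let `v` be any vertex.
Row `v` of the eigenvalue equation reads `(q - d(v)) x_v = ∑_{w ~ v} x_w`
(`sub_degree_mul_eq_sum_neighbors`), and the right-hand side is at most `S - x_v`, with equality
when `v` is adjacent to all other vertices. Hence `(q - (n - 1) + 1) x_i = S` for `i ∈ Y₁`, while
`(q - (n - 2) + 1) x_j ≤ (q - d(j) + 1) x_j ≤ S` for `j ∈ Y₂`. Since `q > n - 1`, the coefficients
are positive and the second one is larger by one, so `x_j < x_i`.
-/

open Finset Matrix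

attribute [local instance] Classical.propDecidable

namespace QGraph

variable {V : Type*} [Fintype V] [DecidableEq V]

/-- Row `v` of the eigenvalue equation `Q(G) x = q x`. -/
lemma sub_degree_mul_eq_sum_neighbors (G : SimpleGraph V) (q : ℝ) (x : V → ℝ)
    (h : qMatrix G *ᵥ x = q • x) (v : V) :
    (q - G.degree v) * x v = ∑ w ∈ G.neighborFinset v, x w := by
  have hv := congrFun h v
  simp only [Matrix.mulVec, dotProduct, qMatrix, Matrix.of_apply, add_mul, ite_mul, zero_mul,
    one_mul, Finset.sum_add_distrib, Finset.sum_ite_eq, Finset.mem_univ, if_true, Pi.smul_apply,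
    smul_eq_mul] at hv
  rw [SimpleGraph.neighborFinset_eq_filter, Finset.sum_filter]
  linarith

lemma neighborFinset_subset_erase (G : SimpleGraph V) (v : V) :
    G.neighborFinset v ⊆ univ.erase v := by
  intro w hw
  rw [SimpleGraph.mem_neighborFinset] at hw
  exact Finset.mem_erase.2 ⟨hw.ne', Finset.mem_univ w⟩

/-- Lemma 3.6(2). Let `G` be a connected member of `𝒜₂(n,k,δ)` with
`q(G) > n-1`, and `x` the positive eigenvector of `Q(G)`. If `Y₁ ≠ ∅` and `Y₂ ≠ ∅` then
`x_i > x_j` for all `i ∈ Y₁` and `j ∈ Y₂`. -/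
theorem stmt12 (n k δ : ℕ) (hk : 3 ≤ k) (hδk : k ≤ δ) (hn : (n : ℝ) ≥ F k δ)
    (E' : Finset (Sym2 (Fin n))) (hE : A2Conds n k δ E')
    (G : SimpleGraph (Fin n))
    (hG : G = (graphA n k δ).deleteEdges (↑E' : Set (Sym2 (Fin n))))
    (hconn : G.Connected)
    (hq : qIndex G > (n : ℝ) - 1)
    (x : Fin n → ℝ) (hx : ∀ v, 0 < x v)
    (heig : qMatrix G *ᵥ x = qIndex G • x)
    (hY1 : ∃ v, inY n k v ∧ G.degree v = n - 1)
    (hY2 : ∃ v, inY n k v ∧ G.degree v ≤ n - 2)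
    (i j : Fin n)
    (hi : inY n k i ∧ G.degree i = n - 1)
    (hj : inY n k j ∧ G.degree j ≤ n - 2) :
    x i > x j := by
  -- For `n = 1` the truncated `n - 2` would be `0 = n - 1`; the nonempty set `E'` rules this out.
  have hn2 : 2 ≤ n := by
    obtain ⟨e, he⟩ : E'.Nonempty := Finset.card_pos.1 (by rw [hE.2]; omega)
    have hedge := hE.1.1 he
    induction e with
    | _ a b =>
      have hne : (a : ℕ) ≠ b := fun h =>
        ((SimpleGraph.mem_edgeSet _).1 hedge).ne (Fin.ext h)
      omega
  have hrow_i := sub_degree_mul_eq_sum_neighbors G _ x heig i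
  have hrow_j := sub_degree_mul_eq_sum_neighbors G _ x heig j
  have hfull : G.neighborFinset i = univ.erase i :=
    Finset.eq_of_subset_of_card_le (neighborFinset_subset_erase G i) (by
      rw [SimpleGraph.card_neighborFinset_eq_degree, hi.2,
        Finset.card_erase_of_mem (Finset.mem_univ i), Finset.card_univ, Fintype.card_fin])
  have hle : ∑ w ∈ G.neighborFinset j, x w ≤ ∑ w ∈ univ.erase j, x w :=
    Finset.sum_le_sum_of_subset_of_nonneg (neighborFinset_subset_erase G j)
      fun w _ _ => (hx w).le
  rw [hfull, hi.2] at hrow_i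
  have hSi := Finset.add_sum_erase univ x (Finset.mem_univ i)
  have hSj := Finset.add_sum_erase univ x (Finset.mem_univ j)
  have hdj : (G.degree j : ℝ) + 2 ≤ n := by
    have : G.degree j + 2 ≤ n := by have := hj.2; omega
    exact_mod_cast this
  have hn1 : ((n - 1 : ℕ) : ℝ) = n - 1 := by
    rw [Nat.cast_sub (by omega), Nat.cast_one]
  rw [hn1] at hrow_i
  have hxj := hx j
  have hxi := hx i
  by_contra hcon
  rw [gt_iff_lt, not_lt] at hcon
  have h1 : (qIndex G - (n - 1)) * x i ≤ (qIndex G - (n - 1)) * x j :=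
    mul_le_mul_of_nonneg_left hcon (by linarith)
  have h2 : (qIndex G - (n - 1) + 1) * x j ≤ (qIndex G - G.degree j) * x j :=
    mul_le_mul_of_nonneg_right (by linarith) hxj.le
  linarith

end QGraph
end
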